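/- arXiv:1801.08778 — 3 statements merged into one kernel-verified Lean document; each statement's English description precedes it below -/
import Mathlib

section
/- For every k ≥ 1 the equality a_k = a_{K(k)} holds if and only if there exists i ≥ 1 with k = m_i. -/
/-! `K k ≤ j` means that `A_{k+1}` is contained in `{a_{k+1}, …, a_j}`. Let `k ≥ 1`, `j = K k - 1`
and `S = {a_{k+1}, …, a_j}`. Then `A_{k+1}` is contained in `S ∪ {a_{K k}}` but not in `S`, so
`a_k = a_{K k}` holds iff `A_{k+1} ⊆ S ∪ {a_k}`. As `A_k = A_{k+1} ∪ {a_k}`, this says that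
`A_k ⊆ {a_k, …, a_j}`, that is `K (k-1) ≤ j`, or `K (k-1) < K k`. Since `K` is monotone and
unbounded, the latter condition singles out exactly the positions `m_i` with `i ≥ 1`. -/

open Filter

/-- The blocks `p k` of the simple Toeplitz subshift coded by `a` and `n`:
`p 0 = a 0 ^ (n 0 - 1)` and `p (k+1)` consists of `n (k+1)` copies of `p k`
separated by `n (k+1) - 1` single letters `a (k+1)`. -/
def ToeplitzBlock {A : Type*} (a : ℕ → A) (n : ℕ → ℕ) : ℕ → List A
  | 0 => List.replicate (n 0 - 1) (a 0)
  | k + 1 => List.intercalate [a (k + 1)] (List.replicate (n (k + 1)) (ToeplitzBlock a n k))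

/-- `lenPrev a n k = |p (k-1)|`, with the convention `|p (-1)| = 0`. -/
def lenPrev {A : Type*} (a : ℕ → A) (n : ℕ → ℕ) : ℕ → ℕ
  | 0 => 0
  | k + 1 => (ToeplitzBlock a n k).length

/-- The language of the simple Toeplitz subshift: all finite words occurring as a
factor of some block `p k`. -/
def ToeplitzLang {A : Type*} (a : ℕ → A) (n : ℕ → ℕ) : Set (List A) :=
  {u | ∃ k, u <:+: ToeplitzBlock a n k}

/-- The complexity function `C L`. -/
noncomputable def cmpl {A : Type*} (a : ℕ → A) (n : ℕ → ℕ) (L : ℕ) : ℕ :=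
  Set.ncard {u | u ∈ ToeplitzLang a n ∧ u.length = L}

/-- The palindrome complexity function `P L`. -/
noncomputable def palCmpl {A : Type*} (a : ℕ → A) (n : ℕ → ℕ) (L : ℕ) : ℕ :=
  Set.ncard {u | u ∈ ToeplitzLang a n ∧ u.length = L ∧ u.reverse = u}

/-- `Ak a k = {a j : j ≥ k}`. -/
def Ak {A : Type*} (a : ℕ → A) (k : ℕ) : Set A := {x | ∃ j, k ≤ j ∧ a j = x}

/-- The eventual alphabet `A_ev = ⋂ k, A_k`. -/
def Aev {A : Type*} (a : ℕ → A) : Set A := ⋂ k, Ak a k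

/-- `Kf a k = min {j > k : {a (k+1), …, a j} = A (k+1)}`. -/
noncomputable def Kf {A : Type*} (a : ℕ → A) (k : ℕ) : ℕ :=
  sInf {j | k < j ∧ {x | ∃ i, k + 1 ≤ i ∧ i ≤ j ∧ a i = x} = Ak a (k + 1)}

/-- The positions `m i` at which `Kf` increases: `m 0 = 0` and
`m (i+1) = min {j > m i : Kf j > Kf (m i)}`. -/
noncomputable def mseq {A : Type*} (a : ℕ → A) : ℕ → ℕ
  | 0 => 0
  | i + 1 => sInf {j | mseq a i < j ∧ Kf a (mseq a i) < Kf a j}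

/-- The repetitivity function `R L`: the least `L'` such that every word of
length `L` of the language is a factor of every word of length `L'`. -/
noncomputable def repet {A : Type*} (a : ℕ → A) (n : ℕ → ℕ) (L : ℕ) : ℕ :=
  sInf {L' | ∀ u ∈ ToeplitzLang a n, u.length = L →
    ∀ w ∈ ToeplitzLang a n, w.length = L' → u <:+: w}

section IncreaseTime

variable {α : Type*} [Preorder α] {f : ℕ → α}

/-- The times at which a sequence exceeds its value at the preceding such time, starting from
time `0`: the recursion of `mseq` for an arbitrary sequence in place of `Kf a`. If the sequence
never again exceeds the value at some time, the next time is the junk value `0`. -/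
noncomputable def increaseTime (f : ℕ → α) : ℕ → ℕ
  | 0 => 0
  | i + 1 => sInf {j | increaseTime f i < j ∧ f (increaseTime f i) < f j}

lemma increaseTime_succ_le {i j : ℕ} (hlt : increaseTime f i < j)
    (hf : f (increaseTime f i) < f j) : increaseTime f (i + 1) ≤ j :=
  Nat.sInf_le ⟨hlt, hf⟩

lemma increaseTime_succ_spec (hmono : Monotone f) (hunb : ∀ i, ∃ j, f i < f j) (i : ℕ) :
    increaseTime f i < increaseTime f (i + 1) ∧
      f (increaseTime f i) < f (increaseTime f (i + 1)) := by
  obtain ⟨j, hj⟩ := hunb (increaseTime f i)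
  exact Nat.sInf_mem (s := {j | increaseTime f i < j ∧ f (increaseTime f i) < f j})
    ⟨j, hmono.reflect_lt hj, hj⟩

lemma strictMono_increaseTime (hmono : Monotone f) (hunb : ∀ i, ∃ j, f i < f j) :
    StrictMono (increaseTime f) :=
  strictMono_nat_of_lt_succ fun i => (increaseTime_succ_spec hmono hunb i).1

lemma exists_increaseTime_le_lt (hmono : Monotone f) (hunb : ∀ i, ∃ j, f i < f j) (k : ℕ) :
    ∃ i, increaseTime f i ≤ k ∧ k < increaseTime f (i + 1) := by
  have hstrict := strictMono_increaseTime hmono hunb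
  have hcover := iUnion_Ico_map_succ_eq_Ici (f := increaseTime f)
    (fun i => hstrict.monotone bot_le) hstrict.not_bddAbove_range_of_isSuccArchimedean
  have hk : k ∈ Set.Ici (increaseTime f ⊥) := Nat.zero_le k
  rw [← hcover] at hk
  exact Set.mem_iUnion.mp hk

lemma exists_increaseTime_succ_eq_iff (hmono : Monotone f) (hunb : ∀ i, ∃ j, f i < f j) {k : ℕ} :
    (∃ i, increaseTime f (i + 1) = k + 1) ↔ f k < f (k + 1) := by
  constructor
  · rintro ⟨i, hi⟩
    obtain ⟨hlt, hf⟩ := increaseTime_succ_spec hmono hunb i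
    rw [hi] at hlt hf
    have hle : increaseTime f i ≤ k := Nat.lt_succ_iff.mp hlt
    have hnot : ¬ f (increaseTime f i) < f k := by
      intro h
      have hsucc : increaseTime f (i + 1) ≤ k := increaseTime_succ_le (hmono.reflect_lt h) h
      omega
    have hge : f k ≤ f (increaseTime f i) := by
      by_contra h
      exact hnot ((hmono hle).lt_of_not_ge h)
    exact hge.trans_lt hf
  · intro hjump
    obtain ⟨i, hle, hlt⟩ := exists_increaseTime_le_lt hmono hunb k
    have hsucc : increaseTime f (i + 1) ≤ k + 1 :=
      increaseTime_succ_le (Nat.lt_succ_of_le hle) ((hmono hle).trans_lt hjump)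
    exact ⟨i, by omega⟩

end IncreaseTime

lemma subset_insert_iff_eq {α : Type*} {s t : Set α} {x y : α} (hy : s ⊆ insert y t)
    (ht : ¬ s ⊆ t) : s ⊆ insert x t ↔ x = y := by
  refine ⟨fun hx => ?_, fun h => h ▸ hy⟩
  obtain ⟨z, hzs, hzt⟩ := Set.not_subset.mp ht
  exact ((hx hzs).resolve_right hzt).symm.trans ((hy hzs).resolve_right hzt)

section Alphabet

variable {A : Type*} {a : ℕ → A}

lemma mseq_eq_increaseTime (a : ℕ → A) (i : ℕ) : mseq a i = increaseTime (Kf a) i := by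
  induction i with
  | zero => rfl
  | succ i ih => simp only [mseq, increaseTime, ih]

lemma Ak_eq_image (a : ℕ → A) (k : ℕ) : Ak a k = a '' Set.Ici k := rfl

lemma Ak_eq_insert (a : ℕ → A) (k : ℕ) : Ak a k = insert (a k) (Ak a (k + 1)) := by
  rw [Ak_eq_image, Ak_eq_image, ← Set.image_insert_eq, Set.Ici_add_one_eq_Ioi, Set.Ioi_insert]

lemma image_Ioc_eq_insert_left {k j : ℕ} (h : k < j) :
    a '' Set.Ioc k j = insert (a (k + 1)) (a '' Set.Ioc (k + 1) j) := by
  rw [← Set.image_insert_eq, Set.insert_Ioc_add_one_left_eq_Ioc h]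

lemma image_Ioc_eq_insert_right {k j : ℕ} (h : k ≤ j) :
    a '' Set.Ioc k (j + 1) = insert (a (j + 1)) (a '' Set.Ioc k j) := by
  rw [← Set.image_insert_eq, Set.insert_Ioc_right_eq_Ioc_add_one h]

lemma image_Ioc_subset_Ak (a : ℕ → A) (k j : ℕ) : a '' Set.Ioc k j ⊆ Ak a (k + 1) :=
  Set.image_mono Set.Ioc_subset_Ioi_self

lemma lt_of_Ak_subset_image_Ioc {k j : ℕ} (h : Ak a (k + 1) ⊆ a '' Set.Ioc k j) : k < j := by
  obtain ⟨l, hl, -⟩ := h ⟨k + 1, le_rfl, rfl⟩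
  exact hl.1.trans_le hl.2

lemma exists_Ak_subset_image_Ioc (hfin : (Set.range a).Finite) (k : ℕ) :
    ∃ j, Ak a (k + 1) ⊆ a '' Set.Ioc k j := by
  obtain ⟨t, htk, ht⟩ := Set.exists_subset_bijOn (Set.Ioi k) a
  have ht_fin : t.Finite := ht.finite_iff_finite.mpr (hfin.subset (Set.image_subset_range _ _))
  obtain ⟨j, hj⟩ := ht_fin.bddAbove
  refine ⟨j, ?_⟩
  calc Ak a (k + 1) = a '' t := ht.image_eq.symm
    _ ⊆ a '' Set.Ioc k j := Set.image_mono fun l hl => ⟨htk hl, hj hl⟩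

lemma Kf_eq_sInf (a : ℕ → A) (k : ℕ) :
    Kf a k = sInf {j | Ak a (k + 1) ⊆ a '' Set.Ioc k j} := by
  refine congrArg sInf (Set.ext fun j => ?_)
  have hwindow : {x | ∃ i, k + 1 ≤ i ∧ i ≤ j ∧ a i = x} = a '' Set.Ioc k j :=
    Set.ext fun x => exists_congr fun i => and_assoc.symm
  rw [Set.mem_ofPred_eq, hwindow]
  exact ⟨fun h => h.2.ge, fun h =>
    ⟨lt_of_Ak_subset_image_Ioc h, (image_Ioc_subset_Ak a k j).antisymm h⟩⟩

lemma Kf_le_iff (hfin : (Set.range a).Finite) {k j : ℕ} :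
    Kf a k ≤ j ↔ Ak a (k + 1) ⊆ a '' Set.Ioc k j := by
  rw [Kf_eq_sInf]
  refine ⟨fun h => ?_, fun h => Nat.sInf_le h⟩
  have hmin : Ak a (k + 1) ⊆ a '' Set.Ioc k (sInf {j | Ak a (k + 1) ⊆ a '' Set.Ioc k j}) :=
    Nat.sInf_mem (s := {j | Ak a (k + 1) ⊆ a '' Set.Ioc k j}) (exists_Ak_subset_image_Ioc hfin k)
  exact hmin.trans (Set.image_mono (Set.Ioc_subset_Ioc_right h))

lemma lt_Kf (hfin : (Set.range a).Finite) (k : ℕ) : k < Kf a k :=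
  lt_of_Ak_subset_image_Ioc ((Kf_le_iff hfin).mp le_rfl)

lemma Kf_le_iff_subset_insert (hfin : (Set.range a).Finite) {k j : ℕ} (h : k < j) :
    Kf a k ≤ j ↔ Ak a (k + 2) ⊆ insert (a (k + 1)) (a '' Set.Ioc (k + 1) j) := by
  rw [Kf_le_iff hfin, Ak_eq_insert, image_Ioc_eq_insert_left h, Set.insert_subset_iff]
  exact and_iff_right (Set.mem_insert _ _)

lemma monotone_Kf (hfin : (Set.range a).Finite) : Monotone (Kf a) := by
  refine monotone_nat_of_le_succ fun k => ?_
  have hk : k < Kf a (k + 1) := (Nat.lt_succ_self k).trans (lt_Kf hfin (k + 1))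
  rw [Kf_le_iff_subset_insert hfin hk]
  exact ((Kf_le_iff hfin).mp le_rfl).trans (Set.subset_insert _ _)

lemma apply_succ_eq_apply_Kf_iff (hfin : (Set.range a).Finite) {k : ℕ} :
    a (k + 1) = a (Kf a (k + 1)) ↔ Kf a k < Kf a (k + 1) := by
  have hlt : k + 1 < Kf a (k + 1) := lt_Kf hfin (k + 1)
  obtain ⟨j, hj⟩ : ∃ j, Kf a (k + 1) = j + 1 := Nat.exists_eq_add_one.mpr (by omega)
  have hkj : k + 1 ≤ j := by omega
  have hsub : Ak a (k + 2) ⊆ insert (a (j + 1)) (a '' Set.Ioc (k + 1) j) := by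
    rw [← image_Ioc_eq_insert_right hkj, ← Kf_le_iff hfin]
    exact hj.le
  have hnot : ¬ Ak a (k + 2) ⊆ a '' Set.Ioc (k + 1) j := by
    rw [← Kf_le_iff hfin]
    omega
  rw [hj, Nat.lt_succ_iff, Kf_le_iff_subset_insert hfin hkj, subset_insert_iff_eq hsub hnot]

end Alphabet

theorem stmt15_general {A : Type*} {a : ℕ → A} (hfin : (Set.range a).Finite) {k : ℕ}
    (hk : 1 ≤ k) : a k = a (Kf a k) ↔ ∃ i, 1 ≤ i ∧ k = mseq a i := by
  obtain ⟨k, rfl⟩ := Nat.exists_eq_add_of_le' hk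
  calc a (k + 1) = a (Kf a (k + 1))
      ↔ Kf a k < Kf a (k + 1) := apply_succ_eq_apply_Kf_iff hfin
    _ ↔ ∃ i, increaseTime (Kf a) (i + 1) = k + 1 :=
        (exists_increaseTime_succ_eq_iff (monotone_Kf hfin) fun i => ⟨_, lt_Kf hfin _⟩).symm
    _ ↔ ∃ i, 1 ≤ i ∧ k + 1 = mseq a i := by
        simp only [mseq_eq_increaseTime]
        exact ⟨fun ⟨i, hi⟩ => ⟨i + 1, i.succ_pos, hi.symm⟩, fun ⟨i, hi, h⟩ =>
          ⟨i - 1, by rw [Nat.sub_add_cancel hi, h]⟩⟩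

/-- for `k ≥ 1`, `a k = a (K k)` holds iff `k = m i` for some `i ≥ 1`. -/
theorem stmt15 {A : Type*} [Fintype A] [Nonempty A]
    (a : ℕ → A) (n : ℕ → ℕ) (hn : ∀ k, 2 ≤ n k) (ha : ∀ k, a k ≠ a (k + 1))
    (hAev : 2 ≤ (Aev a).ncard)
    (k : ℕ) (hk : 1 ≤ k) :
    a k = a (Kf a k) ↔ ∃ i, 1 ≤ i ∧ k = mseq a i := by
  exact stmt15_general (Set.toFinite _) hk
end

section
/- For every i ≥ 1 and every L with |p_{m_i}| − |p_{m_i − 1}| + 1 ≤ L ≤ |p_{m_{i+1}}| − |p_{m_{i+1} − 1}|, the repetitivity function is given by R(L) = 2·|p_{K(m_i) − 1}| + 1 − |p_{m_i}| + |p_{m_i − 1}| + L whenever L ≤ |p_{m_i}| + 1, and R(L) = 2·|p_{K(m_i) − 1}| + 1 + L whenever |p_{m_i}| + 2 ≤ L (here m_i − 1, m_{i+1} − 1 and K(m_i) − 1 denote block indices). -/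
/-!
All blocks are prefixes of one infinite word. With `N_k = n_0 ⋯ n_(k-1) = |p_(k-1)| + 1`, its letter
at a position `t ≥ 1` is `a_j` for the least `j` such that `N_(j+1)` does not divide `t`. Hence
`R(L) + 1 = L + D`, where `D` is the least number such that every factor of length `L` starts in
every window of `D` consecutive positions.

A factor of length at most `N_(k+1)` is determined by its position modulo `N_k` and its letters at
the multiples of `N_k`. If one of these is `a_j ≠ a_k`, it sits at a multiple of `N_(k+1)`, and the
factor recurs around every multiple of `N_j` which carries `a_j`; such multiples have gaps at most
`2 N_j`. Otherwise the factor is a piece of the periodic word `(p_(k-1) a_k)^∞`. For `k = m_(i+1)`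
and `L ≤ N_(k+1) - N_k` it then fits strictly between two multiples of `N_(k+1)`. For `k = m_i`
the letter `a_k` returns for the first time at the index `K = K(k)`, and the factor fits around
every `a_K` at a multiple of `N_K`, with freedom `N_(k+1) - N_k` in the choice of its start.

These bounds are sharp. The multiples `N_(K+1) - N_K` and `N_(K+1) + N_K` of `N_K` carry `a_K`, and
the one between them carries `a_(K+1)`. Take the factor which starts at the second of them. Because
consecutive coding letters differ, another occurrence of it starts at a multiple of `N_k`, and it
has to contain an `a_K` at a multiple of `N_K`. If moreover `L > N_(k+1)`, the letter `a_(k+1)` at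
distance `N_(k+1)` from the start leaves no freedom.
-/

open Filter

namespace SimpleToeplitz

/-! ### The limit word -/

/-- The product `n 0 ⋯ n (k - 1)`. It equals `|p (k - 1)| + 1`, with the convention `|p (-1)| = 0`,
and is the period of the letters at levels below `k`. -/
def period (n : ℕ → ℕ) (k : ℕ) : ℕ := ∏ i ∈ Finset.range k, n i

/-- The level of a position `t ≥ 1` of the limit word: the least `j` such that `period n (j + 1)`
does not divide `t`. It has the junk value `0` at `t = 0`. -/
noncomputable def level (n : ℕ → ℕ) (t : ℕ) : ℕ := sInf {j | ¬ period n (j + 1) ∣ t}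

/-- The letter at position `t` of the limit word, the infinite word which has all blocks `p k` as
prefixes. Positions start at `1`; the value at `0` is junk. -/
noncomputable def letter {A : Type*} (a : ℕ → A) (n : ℕ → ℕ) (t : ℕ) : A := a (level n t)

/-- The factor of the limit word at the positions `s, …, s + L - 1`. -/
noncomputable def factor {A : Type*} (a : ℕ → A) (n : ℕ → ℕ) (s L : ℕ) : List A :=
  (List.range' s L).map (letter a n)

section

variable {A : Type*} {a : ℕ → A} {n : ℕ → ℕ}

@[simp]
lemma period_zero : period n 0 = 1 := Finset.prod_range_zero n

lemma period_succ (k : ℕ) : period n (k + 1) = period n k * n k := Finset.prod_range_succ n k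

lemma period_dvd_period {j k : ℕ} (h : j ≤ k) : period n j ∣ period n k :=
  Finset.prod_dvd_prod_of_subset _ _ n (Finset.range_mono h)

lemma period_pos (hn : ∀ k, 2 ≤ n k) (k : ℕ) : 0 < period n k :=
  Finset.prod_pos fun i _ => zero_lt_two.trans_le (hn i)

lemma period_mono (hn : ∀ k, 2 ≤ n k) : Monotone (period n) := fun _ k h =>
  Nat.le_of_dvd (period_pos hn k) (period_dvd_period h)

lemma two_mul_period_le (hn : ∀ k, 2 ≤ n k) {j k : ℕ} (h : j < k) :
    2 * period n j ≤ period n k :=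
  calc 2 * period n j ≤ n j * period n j := Nat.mul_le_mul_right _ (hn j)
    _ = period n (j + 1) := by rw [period_succ, mul_comm]
    _ ≤ period n k := period_mono hn h

lemma lt_period (hn : ∀ k, 2 ≤ n k) (k : ℕ) : k < period n k := by
  induction k with
  | zero => exact period_pos hn 0
  | succ k ih => have := two_mul_period_le hn k.lt_add_one; omega

lemma eq_of_dvd_of_lt_add {N y z : ℕ} (hy : N ∣ y) (hz : N ∣ z) (hyz : y < z + N)
    (hzy : z < y + N) : y = z :=
  le_antisymm (Nat.le_of_lt_add_of_dvd hyz hy hz) (Nat.le_of_lt_add_of_dvd hzy hz hy)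

lemma not_dvd_add_of_lt {N y d : ℕ} (hy : N ∣ y) (hd : 0 < d) (hdN : d < N) : ¬ N ∣ y + d :=
  fun h => Nat.not_dvd_of_pos_of_lt hd hdN ((Nat.dvd_add_right hy).1 h)

lemma period_dvd_iff_le_level (hn : ∀ k, 2 ≤ n k) {k t : ℕ} (ht : 0 < t) :
    period n k ∣ t ↔ k ≤ level n t := by
  constructor
  · intro hk
    have hex : {j | ¬ period n (j + 1) ∣ t}.Nonempty := by
      refine ⟨t, Nat.not_dvd_of_pos_of_lt ht ?_⟩
      exact (lt_period hn t).trans_le (period_mono hn t.le_succ)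
    by_contra! hlt
    exact Nat.sInf_mem hex ((period_dvd_period hlt).trans hk)
  · intro hk
    cases k with
    | zero => simp
    | succ k => exact not_not.1 (Nat.notMem_of_lt_sInf hk)

lemma letter_eq (hn : ∀ k, 2 ≤ n k) {j t : ℕ} (h : period n j ∣ t)
    (h' : ¬ period n (j + 1) ∣ t) : letter a n t = a j := by
  have ht : 0 < t := Nat.pos_of_ne_zero (by rintro rfl; simp at h')
  rw [period_dvd_iff_le_level hn ht] at h h'
  rw [letter, show level n t = j by omega]

lemma letter_add_eq (hn : ∀ k, 2 ≤ n k) {j y d : ℕ} (hy : period n (j + 1) ∣ y)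
    (hd : period n j ∣ d) (hpos : 0 < d) (hlt : d < period n (j + 1)) :
    letter a n (y + d) = a j :=
  letter_eq hn (((period_dvd_period j.le_succ).trans hy).add hd) (not_dvd_add_of_lt hy hpos hlt)

lemma letter_add_period (hn : ∀ k, 2 ≤ n k) {j y : ℕ} (hy : period n (j + 1) ∣ y) :
    letter a n (y + period n j) = a j := by
  have hpos := period_pos hn j
  have htwo := two_mul_period_le hn j.lt_add_one
  exact letter_add_eq hn hy dvd_rfl hpos (by omega)

lemma letter_period (hn : ∀ k, 2 ≤ n k) (j : ℕ) : letter a n (period n j) = a j := by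
  simpa using letter_add_period (a := a) hn (dvd_zero (period n (j + 1)))

lemma letter_eq_letter_of_modEq (hn : ∀ k, 2 ≤ n k) {k t t' : ℕ} (h : t ≡ t' [MOD period n k])
    (hk : ¬ period n k ∣ t) : letter a n t = letter a n t' := by
  have ht : 0 < t := Nat.pos_of_ne_zero (by rintro rfl; simp at hk)
  have hdvd_iff {j : ℕ} (hj : j ≤ k) : period n j ∣ t' ↔ j ≤ level n t := by
    rw [← period_dvd_iff_le_level hn ht, h.dvd_iff (period_dvd_period hj)]
  have hlt : level n t < k := by rwa [period_dvd_iff_le_level hn ht, not_le] at hk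
  refine (letter_eq hn ((hdvd_iff hlt.le).2 le_rfl) fun hd => ?_).symm
  exact absurd ((hdvd_iff hlt).1 hd) (by omega)

@[simp]
lemma length_factor (s L : ℕ) : (factor a n s L).length = L := by simp [factor]

lemma factor_add (s L₁ L₂ : ℕ) :
    factor a n s (L₁ + L₂) = factor a n s L₁ ++ factor a n (s + L₁) L₂ := by
  rw [factor, ← List.range'_append_1, List.map_append, factor, factor]

lemma factor_eq_factor_iff {r q L : ℕ} :
    factor a n r L = factor a n q L ↔ ∀ i < L, letter a n (r + i) = letter a n (q + i) := by
  simp [factor, List.range'_eq_map_range]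

lemma infix_factor_iff {u : List A} {s L : ℕ} :
    u <:+: factor a n s L ↔
      ∃ r, s ≤ r ∧ r + u.length ≤ s + L ∧ u = factor a n r u.length := by
  constructor
  · rintro ⟨v, w, h⟩
    have hL : v.length + u.length + w.length = L := by
      simpa [add_assoc] using congrArg List.length h
    rw [← hL, factor_add, factor_add] at h
    have hvu := List.append_inj_left h (by simp)
    exact ⟨s + v.length, by omega, by omega, List.append_inj_right hvu (by simp)⟩
  · rintro ⟨r, hsr, hrL, hu⟩
    obtain ⟨d, rfl⟩ := Nat.exists_eq_add_of_le hsr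
    obtain ⟨e, rfl⟩ : ∃ e, L = d + u.length + e := ⟨L - d - u.length, by omega⟩
    rw [factor_add, factor_add, ← hu]
    exact List.infix_append _ _ _

lemma factor_eq_factor_of_modEq (hn : ∀ k, 2 ≤ n k) {k r q L : ℕ} (h : r ≡ q [MOD period n k])
    (hletter : ∀ i < L, period n k ∣ r + i → letter a n (r + i) = letter a n (q + i)) :
    factor a n r L = factor a n q L := by
  rw [factor_eq_factor_iff]
  intro i hi
  by_cases hd : period n k ∣ r + i
  · exact hletter i hi hd
  · exact letter_eq_letter_of_modEq hn (h.add_right i) hd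

end

/-! ### Uniform factors -/

/-- The factor of length `L` at `s` is uniform at level `k` if all its letters of level at least
`k` equal `a k`. Such a factor is a piece of the periodic word with period `p (k - 1) (a k)`. -/
def IsUniform {A : Type*} (a : ℕ → A) (n : ℕ → ℕ) (k s L : ℕ) : Prop :=
  ∀ i < L, period n k ∣ s + i → letter a n (s + i) = a k

section

variable {A : Type*} {a : ℕ → A} {n : ℕ → ℕ}

lemma isUniform_of_period_succ (hn : ∀ k, 2 ≤ n k) {k s L : ℕ}
    (h : ∀ i < L, period n (k + 1) ∣ s + i → letter a n (s + i) = a k) :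
    IsUniform a n k s L := by
  intro i hi hd
  by_cases hd' : period n (k + 1) ∣ s + i
  · exact h i hi hd'
  · exact letter_eq hn hd hd'

lemma isUniform_between (hn : ∀ k, 2 ≤ n k) {k s L y : ℕ} (hy : period n (k + 1) ∣ y)
    (hys : y < s) (hsL : s + L ≤ y + period n (k + 1)) : IsUniform a n k s L := by
  refine isUniform_of_period_succ hn fun i hi hd => ?_
  have := eq_of_dvd_of_lt_add hd hy (by omega) (by omega)
  omega

lemma isUniform_around (hn : ∀ k, 2 ≤ n k) {k s L y : ℕ} (hy : period n (k + 1) ∣ y)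
    (hletter : letter a n y = a k) (hys : y < s + period n (k + 1))
    (hsL : s + L ≤ y + period n (k + 1)) : IsUniform a n k s L := by
  refine isUniform_of_period_succ hn fun i hi hd => ?_
  rwa [eq_of_dvd_of_lt_add hd hy (by omega) (by omega)]

lemma IsUniform.factor_eq (hn : ∀ k, 2 ≤ n k) {k r q L : ℕ} (hr : IsUniform a n k r L)
    (hq : IsUniform a n k q L) (h : r ≡ q [MOD period n k]) :
    factor a n r L = factor a n q L :=
  factor_eq_factor_of_modEq hn h fun i hi hd => by
    rw [hr i hi hd, hq i hi (((h.add_right i).dvd_iff dvd_rfl).1 hd)]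

lemma IsUniform.of_factor_eq {k r q L : ℕ} (hq : IsUniform a n k q L)
    (hrq : factor a n r L = factor a n q L) (h : r ≡ q [MOD period n k]) :
    IsUniform a n k r L := fun i hi hd => by
  rw [factor_eq_factor_iff.1 hrq i hi]
  exact hq i hi (((h.add_right i).dvd_iff dvd_rfl).1 hd)

/-! ### Blocks, language and repetitivity -/

lemma intercalate_replicate_factor (hn : ∀ k, 2 ≤ n k) {k c : ℕ} (hc : c < n k) :
    List.intercalate [a k] (List.replicate (c + 1) (factor a n 1 (period n k - 1))) =
      factor a n 1 ((c + 1) * period n k - 1) := by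
  induction c with
  | zero => simp
  | succ c ih =>
    have hpos := period_pos hn k
    have hmul : (c + 1 + 1) * period n k = period n k + (c + 1) * period n k := by ring
    have hpos' : 0 < (c + 1) * period n k := by positivity
    have hle : (c + 1 + 1) * period n k ≤ period n (k + 1) := by
      rw [period_succ, mul_comm]
      exact Nat.mul_le_mul_left _ hc
    have huniform {s : ℕ} (hs : 0 < s) (hs' : s ≤ 1 + period n k) :
        IsUniform a n k s ((c + 1) * period n k - 1) :=
      isUniform_between hn (dvd_zero _) hs (by omega)
    have hshift : factor a n (1 + period n k) ((c + 1) * period n k - 1) =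
        factor a n 1 ((c + 1) * period n k - 1) :=
      (huniform (by omega) le_rfl).factor_eq hn (huniform one_pos (by omega))
        Nat.add_modEq_right
    have hsep : factor a n (period n k) 1 = [a k] := by simp [factor, letter_period hn]
    have hlen : (c + 1 + 1) * period n k - 1 =
        period n k - 1 + (1 + ((c + 1) * period n k - 1)) := by omega
    rw [hlen, factor_add, factor_add, Nat.add_sub_cancel' hpos, hsep, add_comm (period n k) 1,
      hshift, ← ih (by omega), List.replicate_succ, List.replicate_succ,
      List.intercalate_cons_cons, List.append_assoc]

lemma toeplitzBlock_eq_factor (hn : ∀ k, 2 ≤ n k) (k : ℕ) :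
    ToeplitzBlock a n k = factor a n 1 (period n (k + 1) - 1) := by
  induction k with
  | zero =>
    have hle : 1 + (n 0 - 1) ≤ 0 + period n (0 + 1) := by
      have := hn 0
      rw [period_succ, period_zero]
      omega
    have huniform : IsUniform a n 0 1 (n 0 - 1) := isUniform_between hn (dvd_zero _) one_pos hle
    rw [ToeplitzBlock, period_succ, period_zero, one_mul, eq_comm, List.eq_replicate_iff]
    refine ⟨length_factor _ _, fun b hb => ?_⟩
    obtain ⟨t, ht, rfl⟩ := List.mem_map.1 hb
    obtain ⟨i, hi, rfl⟩ := List.mem_range'.1 ht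
    simpa using huniform i hi (by simp)
  | succ k ih =>
    obtain ⟨c, hc⟩ := Nat.exists_eq_add_of_le' (one_le_two.trans (hn (k + 1)))
    rw [ToeplitzBlock, ih, period_succ (k + 1), mul_comm, hc]
    exact intercalate_replicate_factor hn (by omega)

lemma length_toeplitzBlock_add_one (hn : ∀ k, 2 ≤ n k) (k : ℕ) :
    (ToeplitzBlock a n k).length + 1 = period n (k + 1) := by
  rw [toeplitzBlock_eq_factor hn, length_factor, Nat.sub_add_cancel (period_pos hn _)]

lemma mem_toeplitzLang_iff (hn : ∀ k, 2 ≤ n k) {u : List A} :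
    u ∈ ToeplitzLang a n ↔ ∃ s > 0, u = factor a n s u.length := by
  constructor
  · rintro ⟨k, hk⟩
    rw [toeplitzBlock_eq_factor hn, infix_factor_iff] at hk
    obtain ⟨r, hr, -, hu⟩ := hk
    exact ⟨r, hr, hu⟩
  · rintro ⟨s, hs, hu⟩
    refine ⟨s + u.length, ?_⟩
    rw [toeplitzBlock_eq_factor hn, infix_factor_iff]
    have := lt_period hn (s + u.length + 1)
    exact ⟨s, hs, by omega, hu⟩

lemma factor_mem_toeplitzLang (hn : ∀ k, 2 ≤ n k) {s : ℕ} (hs : 0 < s) (L : ℕ) :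
    factor a n s L ∈ ToeplitzLang a n :=
  (mem_toeplitzLang_iff hn).2 ⟨s, hs, by simp⟩

lemma repet_add_one_eq (hn : ∀ k, 2 ≤ n k) {L D : ℕ}
    (hocc : ∀ q > 0, ∀ s, ∃ r ∈ Set.Ioc s (s + D), factor a n r L = factor a n q L)
    (hmiss : ∃ q > 0, ∃ s, ∀ r ∈ Set.Ioo s (s + D), factor a n r L ≠ factor a n q L) :
    repet a n L + 1 = L + D := by
  have hD : 0 < D := by
    obtain ⟨r, hr, -⟩ := hocc 1 one_pos 0
    have := hr.1.trans_le hr.2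
    omega
  have hmem : L + D - 1 ∈ {L' | ∀ u ∈ ToeplitzLang a n, u.length = L →
      ∀ w ∈ ToeplitzLang a n, w.length = L' → u <:+: w} := by
    rintro u hu rfl w hw hwL
    obtain ⟨q, hq, hu⟩ := (mem_toeplitzLang_iff hn).1 hu
    obtain ⟨s, hs, hw⟩ := (mem_toeplitzLang_iff hn).1 hw
    obtain ⟨r, ⟨hsr, hrs⟩, heq⟩ := hocc q hq (s - 1)
    rw [hw, infix_factor_iff]
    exact ⟨r, by omega, by omega, hu.trans heq.symm⟩
  have hlower : L + D - 1 ≤ repet a n L := by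
    refine le_csInf ⟨_, hmem⟩ fun L' hL' => ?_
    obtain ⟨q, hq, s, hs⟩ := hmiss
    have hinfix := hL' _ (factor_mem_toeplitzLang hn hq L) (length_factor q L)
      _ (factor_mem_toeplitzLang hn s.succ_pos L') (length_factor _ L')
    rw [infix_factor_iff, length_factor] at hinfix
    obtain ⟨r, hsr, hrs, heq⟩ := hinfix
    by_contra! hlt
    exact hs r ⟨hsr, by omega⟩ heq.symm
  have hupper : repet a n L ≤ L + D - 1 := Nat.sInf_le hmem
  omega

/-! ### Recurrence of factors -/

lemma exists_modEq_mem_Ioc {N : ℕ} (hN : 0 < N) (q s : ℕ) :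
    ∃ r ∈ Set.Ioc s (s + N), r ≡ q [MOD N] := by
  induction s with
  | zero =>
    have hlt := Nat.mod_lt q hN
    rcases Nat.eq_zero_or_pos (q % N) with h | h
    · exact ⟨N, ⟨hN, by omega⟩, by simp [Nat.ModEq, h]⟩
    · exact ⟨q % N, ⟨h, by omega⟩, Nat.mod_modEq q N⟩
  | succ s ih =>
    obtain ⟨r, ⟨hsr, hrs⟩, h⟩ := ih
    rcases (Nat.succ_le_of_lt hsr).eq_or_lt with rfl | hlt
    · exact ⟨s + 1 + N, ⟨by omega, le_rfl⟩, Nat.add_modEq_right.trans h⟩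
    · exact ⟨r, ⟨hlt, by omega⟩, h⟩

lemma exists_dvd_mem_Ioc {N : ℕ} (hN : 0 < N) (s : ℕ) : ∃ y ∈ Set.Ioc s (s + N), N ∣ y := by
  simpa only [Nat.modEq_zero_iff_dvd] using exists_modEq_mem_Ioc hN 0 s

lemma exists_letter_eq_mem_Ioc (hn : ∀ k, 2 ≤ n k) (j s : ℕ) :
    ∃ y ∈ Set.Ioc s (s + 2 * period n j), period n j ∣ y ∧ letter a n y = a j := by
  have hpos := period_pos hn j
  obtain ⟨y, ⟨hsy, hys⟩, hy⟩ := exists_dvd_mem_Ioc hpos s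
  by_cases hy' : period n (j + 1) ∣ y
  · exact ⟨y + period n j, ⟨by omega, by omega⟩, hy.add dvd_rfl, letter_add_period hn hy'⟩
  · exact ⟨y, ⟨hsy, by omega⟩, hy, letter_eq hn hy hy'⟩

lemma exists_factor_eq_of_letter_eq (hn : ∀ k, 2 ≤ n k) {k j q i L : ℕ} (hL : L ≤ period n k)
    (hkj : k ≤ j) (hi : i < L) (hd : period n k ∣ q + i) (hletter : letter a n (q + i) = a j)
    (s : ℕ) : ∃ r ∈ Set.Ioc s (s + 2 * period n j), factor a n r L = factor a n q L := by
  obtain ⟨y, ⟨hsy, hys⟩, hy, hy'⟩ := exists_letter_eq_mem_Ioc (a := a) hn j (s + i)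
  obtain ⟨r, rfl⟩ : ∃ r, y = r + i := ⟨y - i, by omega⟩
  have hrd : period n k ∣ r + i := (period_dvd_period hkj).trans hy
  have hmod : q ≡ r [MOD period n k] := Nat.ModEq.add_right_cancel' i
    ((Nat.modEq_zero_iff_dvd.2 hd).trans (Nat.modEq_zero_iff_dvd.2 hrd).symm)
  refine ⟨r, ⟨by omega, by omega⟩, (factor_eq_factor_of_modEq hn hmod fun l hl hld => ?_).symm⟩
  obtain rfl : l = i := by
    have := eq_of_dvd_of_lt_add hld hd (by omega) (by omega)
    omega
  rw [hletter, hy']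

lemma exists_factor_eq_of_not_isUniform (hn : ∀ k, 2 ≤ n k) {k K q L : ℕ}
    (hcov : Ak a (k + 1) ⊆ a '' Set.Icc k K) (hL : L ≤ period n (k + 1)) (hq : 0 < q)
    (h : ¬ IsUniform a n k q L) :
    ∃ j ∈ Set.Ioc k K, a j ≠ a k ∧
      ∀ s, ∃ r ∈ Set.Ioc s (s + 2 * period n j), factor a n r L = factor a n q L := by
  have hforeign : ∃ i < L, period n (k + 1) ∣ q + i ∧ letter a n (q + i) ≠ a k := by
    by_contra! hall
    exact h (isUniform_of_period_succ hn hall)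
  obtain ⟨i, hi, hd, hne⟩ := hforeign
  have hlevel : k + 1 ≤ level n (q + i) := (period_dvd_iff_le_level hn (by omega)).1 hd
  obtain ⟨j, hj, (hjletter : a j = letter a n (q + i))⟩ := hcov ⟨_, hlevel, rfl⟩
  have hjk : a j ≠ a k := hjletter ▸ hne
  have hkj : k < j := hj.1.lt_of_ne (by rintro rfl; exact hjk rfl)
  exact ⟨j, ⟨hkj, hj.2⟩, hjk, exists_factor_eq_of_letter_eq hn hL hkj hi hd hjletter.symm⟩

lemma IsUniform.exists_factor_eq (hn : ∀ k, 2 ≤ n k) {k q L : ℕ} (h : IsUniform a n k q L)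
    (hL : L + period n k ≤ period n (k + 1)) (s : ℕ) :
    ∃ r ∈ Set.Ioc s (s + 2 * period n (k + 1)), factor a n r L = factor a n q L := by
  obtain ⟨y, ⟨hsy, hys⟩, hy⟩ := exists_dvd_mem_Ioc (period_pos hn (k + 1)) s
  obtain ⟨r, ⟨hyr, hry⟩, hmod⟩ := exists_modEq_mem_Ioc (period_pos hn k) q y
  exact ⟨r, ⟨by omega, by omega⟩, (isUniform_between hn hy hyr (by omega)).factor_eq hn h hmod⟩

lemma exists_factor_eq_of_add_period_le (hn : ∀ k, 2 ≤ n k) {M K L : ℕ} (hMK : M < K)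
    (hcov : Ak a (M + 1) ⊆ a '' Set.Icc M K) (hL : L + period n M ≤ period n (M + 1))
    {q : ℕ} (hq : 0 < q) (s : ℕ) :
    ∃ r ∈ Set.Ioc s (s + 2 * period n K), factor a n r L = factor a n q L := by
  have hlarge {j : ℕ} (hj : j ≤ K) : Set.Ioc s (s + 2 * period n j) ⊆
      Set.Ioc s (s + 2 * period n K) :=
    Set.Ioc_subset_Ioc_right (by have := period_mono hn hj; omega)
  by_cases h : IsUniform a n M q L
  · obtain ⟨r, hr, heq⟩ := h.exists_factor_eq hn hL s
    exact ⟨r, hlarge hMK hr, heq⟩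
  · obtain ⟨j, hj, -, hocc⟩ := exists_factor_eq_of_not_isUniform hn hcov (by omega) hq h
    obtain ⟨r, hr, heq⟩ := hocc s
    exact ⟨r, hlarge hj.2 hr, heq⟩

lemma IsUniform.exists_factor_eq_of_letter_eq (hn : ∀ k, 2 ≤ n k) {m K q L : ℕ} (hmK : m < K)
    (hret : a K = a m) (hL : L ≤ period n (m + 1)) (hq : 0 < q)
    (h : IsUniform a n m q L) (s : ℕ) :
    ∃ r ∈ Set.Ioc s (s + (2 * period n K - (period n (m + 1) - period n m))),
      factor a n r L = factor a n q L := by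
  have hpos := period_pos hn m
  have hle := period_mono hn m.le_succ
  have hleK := period_mono hn (Nat.succ_le_of_lt hmK)
  rw [Nat.succ_eq_add_one] at hle hleK
  obtain ⟨z, ⟨hqz, hzq⟩, hz⟩ := exists_dvd_mem_Ioc hpos (q - 1)
  obtain ⟨d, rfl⟩ : ∃ d, z = q + d := ⟨z - q, by omega⟩
  obtain ⟨y, ⟨hsy, hys⟩, hy, hyletter⟩ := exists_letter_eq_mem_Ioc (a := a) hn K (s + d)
  have hoccurs {r : ℕ} (hrd : period n m ∣ r + d) (hyr : y < r + period n (m + 1))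
      (hry : r + d ≤ y) : factor a n r L = factor a n q L := by
    refine (isUniform_around hn ((period_dvd_period hmK).trans hy) (hyletter.trans hret) hyr
      (by omega)).factor_eq hn h (Nat.ModEq.add_right_cancel' d ?_)
    exact (Nat.modEq_zero_iff_dvd.2 hrd).trans (Nat.modEq_zero_iff_dvd.2 hz).symm
  have hym : period n m ∣ y := (period_dvd_period hmK.le).trans hy
  have hN : period n m ∣ period n (m + 1) - period n m :=
    Nat.dvd_sub (period_dvd_period m.le_succ) dvd_rfl
  -- The position `y` of the letter `a K` need not be matched with `q + d`: it may also be matched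
  -- with the last multiple of `period n m` before `q + d + period n (m + 1)`.
  obtain hearly | hlate :=
    le_or_gt y (s + d + (2 * period n K - (period n (m + 1) - period n m)))
  · refine ⟨y - d, ⟨by omega, by omega⟩, hoccurs ?_ (by omega) (by omega)⟩
    rwa [Nat.sub_add_cancel (by omega)]
  · refine ⟨y - (period n (m + 1) - period n m) - d, ⟨by omega, by omega⟩,
      hoccurs ?_ (by omega) (by omega)⟩
    rw [Nat.sub_add_cancel (by omega)]
    exact Nat.dvd_sub hym hN

end

/-- The letter `a m` returns for the first time after the index `m` at the index `K`. -/
structure IsFirstReturn {A : Type*} (a : ℕ → A) (m K : ℕ) : Prop where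
  lt : m < K
  apply_eq : a K = a m
  apply_ne : ∀ j ∈ Set.Ioo m K, a j ≠ a m

section

variable {A : Type*} {a : ℕ → A} {n : ℕ → ℕ}

lemma IsFirstReturn.add_one_lt {m K : ℕ} (h : IsFirstReturn a m K) (ha : a m ≠ a (m + 1)) :
    m + 1 < K :=
  (Nat.succ_le_of_lt h.lt).lt_of_ne (by rintro rfl; exact ha h.apply_eq.symm)

lemma exists_factor_eq_of_le_period (hn : ∀ k, 2 ≤ n k) {m K L : ℕ} (hmK : m < K)
    (hret : a K = a m) (hcov : Ak a (m + 1) ⊆ a '' Set.Icc m K) (hL : L ≤ period n (m + 1))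
    {q : ℕ} (hq : 0 < q) (s : ℕ) :
    ∃ r ∈ Set.Ioc s (s + (2 * period n K - (period n (m + 1) - period n m))),
      factor a n r L = factor a n q L := by
  by_cases h : IsUniform a n m q L
  · exact h.exists_factor_eq_of_letter_eq hn hmK hret hL hq s
  · obtain ⟨j, hj, hjm, hocc⟩ := exists_factor_eq_of_not_isUniform hn hcov hL hq h
    have hjK : j < K := hj.2.lt_of_ne (by rintro rfl; exact hjm hret)
    have htwo := two_mul_period_le hn hjK
    have hle := period_mono hn (Nat.succ_le_of_lt hmK)
    obtain ⟨r, hr, heq⟩ := hocc s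
    exact ⟨r, Set.Ioc_subset_Ioc_right (by rw [Nat.succ_eq_add_one] at hle; omega) hr, heq⟩

/-! ### Windows that miss a factor -/

lemma period_dvd_of_letter_eq (hn : ∀ k, 2 ≤ n k) (ha : ∀ k, a k ≠ a (k + 1)) {m q r : ℕ}
    (hq : period n (m + 1) ∣ q)
    (h : ∀ i ≤ period n m, letter a n (r + i) = letter a n (q + i)) : period n m ∣ r := by
  suffices hind : ∀ l ≤ m, period n l ∣ r from hind m le_rfl
  intro l hl
  induction l with
  | zero => simp
  | succ l ih =>
    have hr := ih (by omega)
    by_contra hnd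
    have hqletter : letter a n (q + period n (l + 1)) = a (l + 1) :=
      letter_add_period hn ((period_dvd_period (by omega)).trans hq)
    have hrletter : letter a n (r + period n (l + 1)) = a l :=
      letter_eq hn (hr.add (period_dvd_period l.le_succ))
        fun hd => hnd ((Nat.dvd_add_left dvd_rfl).1 hd)
    exact ha l (by rw [← hrletter, ← hqletter, h _ (period_mono hn hl)])

lemma IsFirstReturn.period_dvd (hn : ∀ k, 2 ≤ n k) {m K y : ℕ} (hK : IsFirstReturn a m K)
    (hpos : 0 < y) (hy : period n (m + 1) ∣ y) (hletter : letter a n y = a m) :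
    period n K ∣ y := by
  rw [period_dvd_iff_le_level hn hpos] at hy ⊢
  by_contra! hlt
  exact hK.apply_ne _ ⟨hy, hlt⟩ hletter

lemma IsUniform.exists_period_dvd (hn : ∀ k, 2 ≤ n k) {m K r L : ℕ}
    (hK : IsFirstReturn a m K) (h : IsUniform a n m r L) (hpos : 0 < r) (hr : period n m ∣ r)
    (hL : period n (m + 1) < L + period n m) :
    ∃ y, y + period n m ≤ r + period n (m + 1) ∧ r ≤ y ∧ period n K ∣ y ∧
      letter a n y = a K := by
  obtain ⟨y, ⟨hry, hyr⟩, hy⟩ := exists_dvd_mem_Ioc (period_pos hn (m + 1)) (r - 1)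
  have hym : period n m ∣ y := (period_dvd_period m.le_succ).trans hy
  have hle : y + period n m ≤ r + period n (m + 1) :=
    Nat.le_of_lt_add_of_dvd (by omega) (hym.add dvd_rfl) (hr.add (period_dvd_period m.le_succ))
  obtain ⟨i, rfl⟩ : ∃ i, y = r + i := ⟨y - r, by omega⟩
  have hletter : letter a n (r + i) = a m := h i (by omega) hym
  exact ⟨r + i, hle, by omega, hK.period_dvd hn (by omega) hy hletter,
    hletter.trans hK.apply_eq.symm⟩

lemma add_period_le_of_letter_eq (hn : ∀ k, 2 ≤ n k) {K y : ℕ} (ha : a K ≠ a (K + 1))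
    (hy : period n K ∣ y) (hletter : letter a n y = a K)
    (hlt : period n (K + 1) < y + period n K) :
    period n (K + 1) + period n K ≤ y := by
  by_contra! hgt
  have hyK := eq_of_dvd_of_lt_add hy (period_dvd_period K.le_succ) hgt hlt
  exact ha (by rw [← hletter, hyK, letter_period hn])

lemma exists_period_dvd_of_factor_eq (hn : ∀ k, 2 ≤ n k) (ha : ∀ k, a k ≠ a (k + 1))
    {m K q r L : ℕ} (hK : IsFirstReturn a m K) (hq : period n (m + 1) ∣ q)
    (hqletter : letter a n q = a m) (hr : 0 < r) (hL : period n (m + 1) < L + period n m)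
    (h : factor a n r L = factor a n q L) :
    period n m ∣ r ∧ ∃ y, y + period n m ≤ r + period n (m + 1) ∧ r ≤ y ∧ period n K ∣ y ∧
      letter a n y = a K := by
  have hpos := period_pos hn m
  have htwo := two_mul_period_le hn m.lt_add_one
  rw [factor_eq_factor_iff] at h
  have hrm : period n m ∣ r := period_dvd_of_letter_eq hn ha hq fun i hi => h i (by omega)
  have hqm : period n m ∣ q := (period_dvd_period m.le_succ).trans hq
  have huniform : IsUniform a n m q (period n (m + 1) - period n m + 1) :=
    isUniform_around hn hq hqletter (by omega) (by omega)
  have hprefix : factor a n r (period n (m + 1) - period n m + 1) =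
      factor a n q (period n (m + 1) - period n m + 1) :=
    factor_eq_factor_iff.2 fun i hi => h i (by omega)
  have hmod : r ≡ q [MOD period n m] :=
    (Nat.modEq_zero_iff_dvd.2 hrm).trans (Nat.modEq_zero_iff_dvd.2 hqm).symm
  exact ⟨hrm, (huniform.of_factor_eq hprefix hmod).exists_period_dvd hn hK hr hrm (by omega)⟩

-- The position `period n (K + 1) + period n K` carries `a K`, and the previous position with this
-- letter and of level at least `K` is `period n (K + 1) - period n K`: the multiple
-- `period n (K + 1)` of `period n K` between them carries `a (K + 1)`.
lemma period_dvd_and_le_of_factor_eq (hn : ∀ k, 2 ≤ n k) (ha : ∀ k, a k ≠ a (k + 1))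
    {m K r L : ℕ} (hK : IsFirstReturn a m K) (hL : period n (m + 1) < L + period n m)
    (hr : period n (K + 1) < r + period n K)
    (h : factor a n r L = factor a n (period n (K + 1) + period n K) L) :
    period n m ∣ r ∧
      period n (K + 1) + period n K + period n m ≤ r + period n (m + 1) := by
  have htwo := two_mul_period_le hn K.lt_add_one
  have hq : period n (m + 1) ∣ period n (K + 1) + period n K :=
    (period_dvd_period (hK.lt.trans K.lt_add_one)).add (period_dvd_period hK.lt)
  have hqletter : letter a n (period n (K + 1) + period n K) = a m :=
    (letter_add_period hn dvd_rfl).trans hK.apply_eq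
  obtain ⟨hrm, y, hyr, hry, hy, hletter⟩ :=
    exists_period_dvd_of_factor_eq hn ha hK hq hqletter (by omega) hL h
  have hqy := add_period_le_of_letter_eq hn (ha K) hy hletter (by omega)
  exact ⟨hrm, by omega⟩

lemma exists_forall_factor_ne_of_lt_add_period (hn : ∀ k, 2 ≤ n k) (ha : ∀ k, a k ≠ a (k + 1))
    {m K L : ℕ} (hK : IsFirstReturn a m K) (hL : period n (m + 1) < L + period n m) :
    ∃ q > 0, ∃ s, ∀ r ∈ Set.Ioo s (s + (2 * period n K - (period n (m + 1) - period n m))),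
      factor a n r L ≠ factor a n q L := by
  have hposK := period_pos hn K
  have htwo := two_mul_period_le hn K.lt_add_one
  refine ⟨period n (K + 1) + period n K, by omega, period n (K + 1) - period n K,
    fun r ⟨hsr, hrs⟩ h => ?_⟩
  have := (period_dvd_and_le_of_factor_eq hn ha hK hL (by omega) h).2
  omega

lemma exists_forall_factor_ne_of_period_lt (hn : ∀ k, 2 ≤ n k) (ha : ∀ k, a k ≠ a (k + 1))
    {m K L : ℕ} (hK : IsFirstReturn a m K) (hL : period n (m + 1) < L) :
    ∃ q > 0, ∃ s, ∀ r ∈ Set.Ioo s (s + 2 * period n K), factor a n r L ≠ factor a n q L := by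
  have hposm := period_pos hn m
  have hposK := period_pos hn K
  have htwo := two_mul_period_le hn K.lt_add_one
  have hmK := hK.add_one_lt (ha m)
  refine ⟨period n (K + 1) + period n K, by omega, period n (K + 1) - period n K,
    fun r ⟨hsr, hrs⟩ h => ?_⟩
  obtain ⟨hrm, hqr⟩ := period_dvd_and_le_of_factor_eq hn ha hK (by omega) (by omega) h
  have hq : period n (m + 1 + 1) ∣ period n (K + 1) + period n K :=
    (period_dvd_period (by omega)).add (period_dvd_period hmK)
  have hqletter : letter a n (period n (K + 1) + period n K + period n (m + 1)) = a (m + 1) :=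
    letter_add_period hn hq
  have hrletter : letter a n (r + period n (m + 1)) = a m := by
    refine letter_eq hn (hrm.add (period_dvd_period m.le_succ)) fun hd => ?_
    have := eq_of_dvd_of_lt_add hd ((period_dvd_period (m + 1).le_succ).trans hq) (by omega)
      (by omega)
    omega
  exact ha m (by rw [← hrletter, ← hqletter, factor_eq_factor_iff.1 h _ hL])

theorem repet_add_one_of_le_period (hn : ∀ k, 2 ≤ n k) (ha : ∀ k, a k ≠ a (k + 1))
    {m K L : ℕ} (hK : IsFirstReturn a m K) (hcov : Ak a (m + 1) ⊆ a '' Set.Icc m K)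
    (hL : period n (m + 1) < L + period n m) (hL' : L ≤ period n (m + 1)) :
    repet a n L + 1 = L + (2 * period n K - (period n (m + 1) - period n m)) :=
  repet_add_one_eq hn
    (fun _ hq s => exists_factor_eq_of_le_period hn hK.lt hK.apply_eq hcov hL' hq s)
    (exists_forall_factor_ne_of_lt_add_period hn ha hK hL)

theorem repet_add_one_of_period_lt (hn : ∀ k, 2 ≤ n k) (ha : ∀ k, a k ≠ a (k + 1))
    {m M K L : ℕ} (hK : IsFirstReturn a m K) (hMK : M < K)
    (hcov : Ak a (M + 1) ⊆ a '' Set.Icc M K)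
    (hL : period n (m + 1) < L) (hL' : L + period n M ≤ period n (M + 1)) :
    repet a n L + 1 = L + 2 * period n K :=
  repet_add_one_eq hn
    (fun _ hq s => exists_factor_eq_of_add_period_le hn hMK hcov hL' hq s)
    (exists_forall_factor_ne_of_period_lt hn ha hK hL)

/-! ### The sequences `K` and `m` -/

lemma Ak_antitone : Antitone (Ak a) := by
  rintro k l hkl _ ⟨j, hj, rfl⟩
  exact ⟨j, hkl.trans hj, rfl⟩

lemma exists_Ak_subset_image [Finite A] (k : ℕ) :
    ∃ j > k, Ak a (k + 1) ⊆ a '' Set.Icc (k + 1) j := by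
  obtain ⟨t, htk, ht⟩ := Set.exists_subset_bijOn (Set.Ici (k + 1)) a
  have htfin : t.Finite := ht.finite_iff_finite.2 (Set.toFinite _)
  obtain ⟨C, hC⟩ := htfin.bddAbove
  refine ⟨C + k + 1, by omega, ?_⟩
  rintro _ ⟨j, hj, rfl⟩
  obtain ⟨i, hi, hij⟩ := ht.surjOn ⟨j, hj, rfl⟩
  exact ⟨i, ⟨htk hi, by have := hC hi; omega⟩, hij⟩

lemma Kf_eq_sInf (k : ℕ) :
    Kf a k = sInf {j | k < j ∧ Ak a (k + 1) ⊆ a '' Set.Icc (k + 1) j} := by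
  rw [Kf]
  congr! 4 with j
  rw [subset_antisymm_iff]
  have himage : {x | ∃ i, k + 1 ≤ i ∧ i ≤ j ∧ a i = x} = a '' Set.Icc (k + 1) j := by
    ext; simp [and_assoc]
  have hsub : a '' Set.Icc (k + 1) j ⊆ Ak a (k + 1) := by
    rintro _ ⟨i, hi, rfl⟩
    exact ⟨i, hi.1, rfl⟩
  rw [himage]
  exact and_iff_right hsub

lemma Kf_spec [Finite A] (k : ℕ) :
    k < Kf a k ∧ Ak a (k + 1) ⊆ a '' Set.Icc (k + 1) (Kf a k) := by
  rw [Kf_eq_sInf]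
  exact Nat.sInf_mem (exists_Ak_subset_image k)

lemma Kf_le {k j : ℕ} (hkj : k < j) (h : Ak a (k + 1) ⊆ a '' Set.Icc (k + 1) j) : Kf a k ≤ j := by
  rw [Kf_eq_sInf]
  exact Nat.sInf_le ⟨hkj, h⟩

lemma add_one_lt_Kf [Finite A] {k : ℕ} (ha : a (k + 1) ≠ a (k + 2)) : k + 1 < Kf a k := by
  obtain ⟨hlt, hcov⟩ := Kf_spec (a := a) k
  refine (Nat.succ_le_of_lt hlt).lt_of_ne fun h => ?_
  obtain ⟨i, hi, hia⟩ := hcov ⟨k + 2, by omega, rfl⟩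
  rw [← h, Set.mem_Icc] at hi
  obtain rfl : i = k + 1 := by omega
  exact ha hia

lemma not_Ak_subset_image_pred_Kf [Finite A] {k : ℕ} (ha : a (k + 1) ≠ a (k + 2)) :
    ¬ Ak a (k + 1) ⊆ a '' Set.Icc (k + 1) (Kf a k - 1) := fun h => by
  have hlt := add_one_lt_Kf ha
  have := Kf_le (by omega) h
  omega

lemma mem_image_of_mem_Ak_of_ne [Finite A] {k K : ℕ} (h : Kf a k ≤ K) {x : A}
    (hx : x ∈ Ak a (k + 1)) (hne : x ≠ a (k + 1)) : x ∈ a '' Set.Icc (k + 2) K := by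
  obtain ⟨j, hj, rfl⟩ := (Kf_spec k).2 hx
  have hlt : k + 1 < j := hj.1.lt_of_ne (by rintro rfl; exact hne rfl)
  exact ⟨j, ⟨hlt, hj.2.trans h⟩, rfl⟩

lemma isFirstReturn_Kf [Finite A] {k : ℕ} (ha : a (k + 2) ≠ a (k + 3))
    (h : Kf a k < Kf a (k + 1)) : IsFirstReturn a (k + 1) (Kf a (k + 1)) := by
  have hlt := (Kf_spec (a := a) (k + 1)).1
  have hmissed : ∃ x ∈ Ak a (k + 2), x ∉ a '' Set.Icc (k + 2) (Kf a (k + 1) - 1) :=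
    Set.not_subset.1 (not_Ak_subset_image_pred_Kf ha)
  obtain ⟨x, hx, hxmissed⟩ := hmissed
  obtain rfl : x = a (k + 1) := by
    by_contra hne
    exact hxmissed (mem_image_of_mem_Ak_of_ne (by omega) (Ak_antitone (k + 1).le_succ hx) hne)
  have hne : ∀ j ∈ Set.Ioo (k + 1) (Kf a (k + 1)), a j ≠ a (k + 1) := fun j ⟨hkj, hjK⟩ hj =>
    hxmissed ⟨j, ⟨hkj, by omega⟩, hj⟩
  obtain ⟨j, hj, hja⟩ := (Kf_spec (k + 1)).2 hx
  obtain rfl : j = Kf a (k + 1) :=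
    hj.2.eq_of_not_lt fun hjK => hne j ⟨hj.1, hjK⟩ hja
  exact ⟨hlt, hja, hne⟩

lemma mseq_succ_mem [Finite A] (a : ℕ → A) (i : ℕ) :
    mseq a i < mseq a (i + 1) ∧ Kf a (mseq a i) < Kf a (mseq a (i + 1)) := by
  have hlt := (Kf_spec (a := a) (mseq a i)).1
  exact Nat.sInf_mem (s := {j | mseq a i < j ∧ Kf a (mseq a i) < Kf a j})
    ⟨Kf a (mseq a i), hlt, (Kf_spec _).1⟩

lemma Kf_le_Kf_mseq {i j : ℕ} (hij : mseq a i ≤ j) (hj : j < mseq a (i + 1)) :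
    Kf a j ≤ Kf a (mseq a i) := by
  rcases hij.eq_or_lt with rfl | hlt
  · exact le_rfl
  · by_contra! hK
    exact Nat.notMem_of_lt_sInf hj ⟨hlt, hK⟩

lemma exists_mseq_succ_eq_add_one [Finite A] (a : ℕ → A) (i : ℕ) :
    ∃ k, mseq a (i + 1) = k + 1 ∧ Kf a k ≤ Kf a (mseq a i) := by
  have hlt := (mseq_succ_mem a i).1
  exact ⟨mseq a (i + 1) - 1, by omega, Kf_le_Kf_mseq (by omega) (by omega)⟩

lemma isFirstReturn_mseq_succ [Finite A] (ha : ∀ k, a k ≠ a (k + 1)) (i : ℕ) :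
    IsFirstReturn a (mseq a (i + 1)) (Kf a (mseq a (i + 1))) := by
  obtain ⟨k, hk, hle⟩ := exists_mseq_succ_eq_add_one a i
  have hlt := (mseq_succ_mem a i).2
  rw [hk] at hlt ⊢
  exact isFirstReturn_Kf (ha _) (hle.trans_lt hlt)

lemma mseq_succ_lt_Kf [Finite A] (ha : ∀ k, a k ≠ a (k + 1)) (i : ℕ) :
    mseq a (i + 1) < Kf a (mseq a i) := by
  obtain ⟨k, hk, hle⟩ := exists_mseq_succ_eq_add_one a i
  have hlt := add_one_lt_Kf (ha (k + 1))
  omega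

lemma Ak_mseq_succ_subset [Finite A] (a : ℕ → A) (i : ℕ) :
    Ak a (mseq a (i + 1)) ⊆ a '' Set.Icc (mseq a (i + 1)) (Kf a (mseq a i)) := by
  obtain ⟨k, hk, hle⟩ := exists_mseq_succ_eq_add_one a i
  rw [hk]
  exact (Kf_spec k).2.trans (Set.image_mono (Set.Icc_subset_Icc_right hle))

lemma length_toeplitzBlock_pred_add_one (hn : ∀ k, 2 ≤ n k) {k : ℕ} (hk : 0 < k) :
    (ToeplitzBlock a n (k - 1)).length + 1 = period n k := by
  rw [length_toeplitzBlock_add_one hn, Nat.sub_add_cancel hk]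

end

end SimpleToeplitz

open SimpleToeplitz in
/-- the repetitivity function on the range
`|p (m i)| - |p (m i - 1)| + 1 ≤ L ≤ |p (m (i+1))| - |p (m (i+1) - 1)|` for `i ≥ 1`. -/
theorem stmt16 {A : Type*} [Fintype A] [Nonempty A]
    (a : ℕ → A) (n : ℕ → ℕ) (hn : ∀ k, 2 ≤ n k) (ha : ∀ k, a k ≠ a (k + 1))
    (hAev : 2 ≤ (Aev a).ncard)
    (i : ℕ) (hi : 1 ≤ i) (L : ℕ)
    (hL1 : (ToeplitzBlock a n (mseq a i)).length + 1 ≤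
      L + (ToeplitzBlock a n (mseq a i - 1)).length)
    (hL2 : L + (ToeplitzBlock a n (mseq a (i + 1) - 1)).length ≤
      (ToeplitzBlock a n (mseq a (i + 1))).length) :
    (L ≤ (ToeplitzBlock a n (mseq a i)).length + 1 →
      (repet a n L : ℤ) =
        2 * ((ToeplitzBlock a n (Kf a (mseq a i) - 1)).length : ℤ) + 1
          - ((ToeplitzBlock a n (mseq a i)).length : ℤ)
          + ((ToeplitzBlock a n (mseq a i - 1)).length : ℤ) + (L : ℤ)) ∧
    ((ToeplitzBlock a n (mseq a i)).length + 2 ≤ L →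
      (repet a n L : ℤ) =
        2 * ((ToeplitzBlock a n (Kf a (mseq a i) - 1)).length : ℤ) + 1 + (L : ℤ)) := by
  obtain ⟨i, rfl⟩ := Nat.exists_eq_add_of_le' hi
  have hm := (mseq_succ_mem a i).1
  have hM := (mseq_succ_mem a (i + 1)).1
  have hK := isFirstReturn_mseq_succ ha i
  have hMK := mseq_succ_lt_Kf ha (i + 1)
  have hm_len := length_toeplitzBlock_add_one (a := a) hn (mseq a (i + 1))
  have hm_pred := length_toeplitzBlock_pred_add_one (a := a) hn (Nat.zero_lt_of_lt hm)
  have hM_len := length_toeplitzBlock_add_one (a := a) hn (mseq a (i + 1 + 1))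
  have hM_pred := length_toeplitzBlock_pred_add_one (a := a) hn (Nat.zero_lt_of_lt hM)
  have hK_pred := length_toeplitzBlock_pred_add_one (a := a) hn (Nat.zero_lt_of_lt hMK)
  refine ⟨fun hL => ?_, fun hL => ?_⟩
  · have hm_le : period n (mseq a (i + 1)) ≤ period n (mseq a (i + 1) + 1) :=
      period_mono hn (Nat.le_succ _)
    have hmK : period n (mseq a (i + 1) + 1) ≤ period n (Kf a (mseq a (i + 1))) :=
      period_mono hn hK.lt
    have := repet_add_one_of_le_period hn ha hK
      ((Kf_spec _).2.trans (Set.image_mono (Set.Icc_subset_Icc_left (Nat.le_succ _))))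
      (L := L) (by omega) (by omega)
    omega
  · have := repet_add_one_of_period_lt hn ha hK hMK
      ((Ak_antitone (Nat.le_succ _)).trans (Ak_mseq_succ_subset a (i + 1))) (L := L)
      (by omega) (by omega)
    omega
end

section
/- The simple Toeplitz subshift is linearly repetitive — i.e. there exists a constant c such that R(L) ≤ c·L for all L ≥ 1 — if and only if the sequence i ↦ ∏_{j = m_i + 1}^{K(m_i) − 1} n_j (for i ≥ 1) is bounded above. -/
/-!
Put `q k = n 0 ⋯ n (k-1)`, so that `|p k| + 1 = q (k+1)`. All blocks are prefixes of one infinite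
word, whose letter at position `s ≥ 1` is `a j` for the largest `j` with `q j ∣ s`; the language
consists of the factors of this word. The word is `q k`-periodic off the multiples of `q k`, and at
these multiples it shows the letters of `A_k`.

*Upper bound.* A word of length at most `q (k+1)` meets at most one multiple of `q (k+1)`, so it is
determined by one letter of `A_{k+1}` and the position of that letter. The letter equals `a i` with
`k < i ≤ K k`, and positions of level `i` occur in every interval of length `2 q i ≤ 2 q (K k)`.
Hence `R L ≤ 3 q (K k)` for `L ≤ q (k+1)`. The ratio `q (K k) / q (k+1)` is the product
`n (k+1) ⋯ n (K k - 1)`; for `m i ≤ k < m (i+1)` it is largest at `k = m i`, and it dominates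
`n (k+1)` because `K k ≥ k + 2`.

*Lower bound.* Let `k = m (i+1)`. Then `K k` is the first index after `k` at which the letter `a k`
returns. The factor of length `2 q (k+1) - 1` centred at position `q (K k)` therefore has period
`q k`. No factor of that length inside the prefix `p (K k - 1)` has this period, because it contains
a multiple of `q (k+1)` carrying a letter different from `a k`. Hence
`q (K k) ≤ R (2 q (k+1) - 1)`.
-/

open Filter

/-! ### Factors of an infinite word -/

section Factors

variable {A : Type*} {f : ℕ → A}

/-- The factor of length `L` starting at position `s` of the infinite word `f`. -/
def factorAt (f : ℕ → A) (s L : ℕ) : List A := (List.range' s L).map f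

@[simp] lemma length_factorAt (s L : ℕ) : (factorAt f s L).length = L := by simp [factorAt]

lemma factorAt_add (s L M : ℕ) : factorAt f s (L + M) = factorAt f s L ++ factorAt f (s + L) M := by
  simp [factorAt, ← List.map_append]

lemma factorAt_eq_iff {s t L : ℕ} :
    factorAt f s L = factorAt f t L ↔ ∀ i < L, f (s + i) = f (t + i) := by
  simp [factorAt, List.ext_getElem_iff]

lemma infix_factorAt_iff {u : List A} {s L : ℕ} :
    u <:+: factorAt f s L ↔ ∃ t, s ≤ t ∧ t + u.length ≤ s + L ∧ u = factorAt f t u.length := by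
  constructor
  · rintro ⟨x, y, hxy⟩
    obtain rfl : x.length + u.length + y.length = L := by
      simpa [add_assoc] using congrArg List.length hxy
    rw [factorAt_add, factorAt_add] at hxy
    have hxu := List.append_inj_left hxy (by simp)
    exact ⟨s + x.length, by omega, by omega, List.append_inj_right hxu (by simp)⟩
  · rintro ⟨t, hst, htL, hu⟩
    obtain ⟨x, rfl⟩ := Nat.exists_eq_add_of_le hst
    obtain ⟨y, hy⟩ := Nat.exists_eq_add_of_le htL
    obtain rfl : L = x + u.length + y := by omega
    exact ⟨factorAt f s x, factorAt f (s + (x + u.length)) y, by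
      rw [factorAt_add, factorAt_add, ← hu]⟩

lemma intercalate_replicate_eq_factorAt {x : A} {w : List A} {p : ℕ} (c s : ℕ)
    (hx : ∀ d < c, f (s + d * (p + 1) + p) = x)
    (hw : ∀ d ≤ c, factorAt f (s + d * (p + 1)) p = w) :
    List.intercalate [x] (List.replicate (c + 1) w) = factorAt f s (c * (p + 1) + p) := by
  induction c generalizing s with
  | zero => simpa using (hw 0 le_rfl).symm
  | succ c ih =>
    have shift (d : ℕ) : s + (p + 1) + d * (p + 1) = s + (d + 1) * (p + 1) := by ring
    have tail := ih (s + (p + 1)) (fun d hd ↦ by rw [shift]; exact hx _ (by omega))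
      (fun d hd ↦ by rw [shift]; exact hw _ (by omega))
    have head : factorAt f s (p + 1) = w ++ [x] := by
      have h₀ := hx 0 c.succ_pos
      have h₁ := hw 0 (Nat.zero_le _)
      simp only [zero_mul, add_zero] at h₀ h₁
      rw [factorAt_add, h₁]
      simp [factorAt, h₀]
    rw [List.replicate_succ, List.intercalate_cons_of_ne_nil (by simp), tail, ← head,
      ← factorAt_add]
    congr 1
    ring

end Factors

/-! ### Levels of positions -/

section Levels

variable {n : ℕ → ℕ}

lemma exists_lt_dvd_add {q : ℕ} (hq : 0 < q) (s : ℕ) : ∃ r < q, q ∣ s + r := by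
  refine ⟨(q - 1) * s % q, Nat.mod_lt _ hq, ?_⟩
  have : s + (q - 1) * s = q * s := by rw [← one_add_mul, Nat.add_sub_cancel' (Nat.one_le_of_lt hq)]
  rw [Nat.dvd_iff_mod_eq_zero, Nat.add_mod_mod, this, Nat.mul_mod_right]

/-- The products `n 0 * ⋯ * n (k - 1)`, indexed so that `|p k| + 1 = blockPeriod n (k + 1)` and
`blockPeriod n 0 = 1`. -/
def blockPeriod (n : ℕ → ℕ) (k : ℕ) : ℕ := ∏ i ∈ Finset.range k, n i

@[simp] lemma blockPeriod_zero : blockPeriod n 0 = 1 := Finset.prod_range_zero n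

lemma blockPeriod_succ (k : ℕ) : blockPeriod n (k + 1) = n k * blockPeriod n k :=
  Finset.prod_range_succ_comm n k

lemma blockPeriod_dvd {i j : ℕ} (h : i ≤ j) : blockPeriod n i ∣ blockPeriod n j :=
  Finset.prod_dvd_prod_of_subset _ _ _ (Finset.range_mono h)

lemma blockPeriod_mul_prod_Icc {k K : ℕ} (h : k < K) :
    blockPeriod n (k + 1) * ∏ j ∈ Finset.Icc (k + 1) (K - 1), n j = blockPeriod n K := by
  rw [← Finset.Ico_add_one_right_eq_Icc, Nat.sub_add_cancel (Nat.one_le_of_lt h)]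
  exact Finset.prod_range_mul_prod_Ico n h

lemma blockPeriod_pos (hn : ∀ k, 0 < n k) (k : ℕ) : 0 < blockPeriod n k :=
  Finset.prod_pos fun i _ ↦ hn i

lemma blockPeriod_strictMono (hn : ∀ k, 2 ≤ n k) : StrictMono (blockPeriod n) :=
  strictMono_nat_of_lt_succ fun k ↦ by
    rw [blockPeriod_succ]
    exact lt_mul_of_one_lt_left (blockPeriod_pos (fun i ↦ two_pos.trans_le (hn i)) k) (hn k)

lemma lt_blockPeriod (hn : ∀ k, 2 ≤ n k) (k : ℕ) : k < blockPeriod n k := by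
  induction k with
  | zero => simp
  | succ k ih => exact lt_of_le_of_lt ih (blockPeriod_strictMono hn k.lt_succ_self)

/-- The level of a position `s ≥ 1` of the Toeplitz word: the largest `k` such that
`blockPeriod n k` divides `s`. The value at `s = 0` is irrelevant. -/
noncomputable def toeplitzLevel (n : ℕ → ℕ) (s : ℕ) : ℕ := sInf {k | ¬ blockPeriod n (k + 1) ∣ s}

lemma le_toeplitzLevel_iff (hn : ∀ k, 2 ≤ n k) {s k : ℕ} (hs : s ≠ 0) :
    k ≤ toeplitzLevel n s ↔ blockPeriod n k ∣ s := by
  constructor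
  · intro hk
    cases k with
    | zero => simp
    | succ j => exact not_not.1 (Nat.notMem_of_lt_sInf hk)
  · refine fun hk ↦ le_csInf ⟨s, fun hd ↦ ?_⟩ fun j hj ↦ ?_
    · exact (Nat.le_of_dvd (Nat.pos_of_ne_zero hs) hd).not_gt
        (s.lt_succ_self.trans (lt_blockPeriod hn _))
    · by_contra! hjk
      exact hj ((blockPeriod_dvd hjk).trans hk)

lemma toeplitzLevel_eq_of_dvd (hn : ∀ k, 2 ≤ n k) {s k : ℕ} (h : blockPeriod n k ∣ s)
    (h' : ¬ blockPeriod n (k + 1) ∣ s) : toeplitzLevel n s = k := by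
  have hs : s ≠ 0 := by rintro rfl; simp at h'
  rw [← le_toeplitzLevel_iff hn hs] at h h'
  omega

lemma toeplitzLevel_mul_blockPeriod (hn : ∀ k, 2 ≤ n k) {d k : ℕ} (hd : ¬ n k ∣ d) :
    toeplitzLevel n (d * blockPeriod n k) = k := by
  refine toeplitzLevel_eq_of_dvd hn (Nat.dvd_mul_left _ _) ?_
  rwa [blockPeriod_succ, Nat.mul_dvd_mul_iff_right (lt_blockPeriod hn k).pos]

lemma toeplitzLevel_congr (hn : ∀ k, 2 ≤ n k) {s t k : ℕ} (hst : s ≡ t [MOD blockPeriod n k])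
    (hs : ¬ blockPeriod n k ∣ s) : toeplitzLevel n s = toeplitzLevel n t := by
  have ht : ¬ blockPeriod n k ∣ t := fun h ↦ hs ((hst.dvd_iff dvd_rfl).2 h)
  refine eq_of_forall_le_iff fun j ↦ ?_
  rw [le_toeplitzLevel_iff hn (by rintro rfl; simp at hs),
    le_toeplitzLevel_iff hn (by rintro rfl; simp at ht)]
  rcases le_total j k with hjk | hkj
  · exact hst.dvd_iff (blockPeriod_dvd hjk)
  · exact iff_of_false (fun h ↦ hs ((blockPeriod_dvd hkj).trans h))
      (fun h ↦ ht ((blockPeriod_dvd hkj).trans h))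

lemma exists_toeplitzLevel_eq (hn : ∀ k, 2 ≤ n k) (i N : ℕ) :
    ∃ M, N ≤ M ∧ M < N + 2 * blockPeriod n i ∧ toeplitzLevel n M = i := by
  obtain ⟨r, hr, d, hd⟩ := exists_lt_dvd_add (lt_blockPeriod hn i).pos N
  rw [mul_comm] at hd
  by_cases hdvd : n i ∣ d
  · have hsucc : ¬ n i ∣ d + 1 := fun h ↦
      Nat.not_dvd_of_pos_of_lt one_pos (hn i) ((Nat.dvd_add_right hdvd).1 h)
    exact ⟨(d + 1) * blockPeriod n i, by rw [add_one_mul]; omega, by rw [add_one_mul]; omega,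
      toeplitzLevel_mul_blockPeriod hn hsucc⟩
  · exact ⟨d * blockPeriod n i, by omega, by omega, toeplitzLevel_mul_blockPeriod hn hdvd⟩

end Levels

/-! ### The Toeplitz word and its language -/

section Word

variable {A : Type*} {a : ℕ → A} {n : ℕ → ℕ}

/-- The infinite word of which every block `p k` is a prefix. Positions start at `1`. -/
noncomputable def toeplitzWord (a : ℕ → A) (n : ℕ → ℕ) (s : ℕ) : A := a (toeplitzLevel n s)

lemma toeplitzWord_congr (hn : ∀ k, 2 ≤ n k) {s t k : ℕ} (hst : s ≡ t [MOD blockPeriod n k])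
    (hs : ¬ blockPeriod n k ∣ s) : toeplitzWord a n s = toeplitzWord a n t :=
  congrArg a (toeplitzLevel_congr hn hst hs)

lemma toeplitzBlock_eq_factorAt (hn : ∀ k, 2 ≤ n k) (k : ℕ) :
    ToeplitzBlock a n k = factorAt (toeplitzWord a n) 1 (blockPeriod n (k + 1) - 1) := by
  induction k with
  | zero =>
    refine (List.eq_replicate_iff.2 ⟨by simp [blockPeriod_succ], fun b hb ↦ ?_⟩).symm
    simp only [factorAt, List.mem_map, List.mem_range'_1] at hb
    obtain ⟨s, hs, rfl⟩ := hb
    have hlevel : ¬ blockPeriod n (0 + 1) ∣ s := Nat.not_dvd_of_pos_of_lt hs.1 (by omega)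
    exact congrArg a (toeplitzLevel_eq_of_dvd hn (by simp) hlevel)
  | succ k ih =>
    obtain ⟨p, hp⟩ := Nat.exists_eq_add_one.2 (lt_blockPeriod hn (k + 1)).pos
    obtain ⟨c, hc⟩ := Nat.exists_eq_add_one.2 (two_pos.trans_le (hn (k + 1)))
    rw [hp, Nat.add_sub_cancel] at ih
    have hlen : blockPeriod n (k + 1 + 1) - 1 = c * (p + 1) + p := by
      rw [blockPeriod_succ, hp, hc, add_one_mul]
      omega
    rw [ToeplitzBlock, ih, hc, hlen]
    apply intercalate_replicate_eq_factorAt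
    · intro d hd
      have hpos : 1 + d * (p + 1) + p = (d + 1) * blockPeriod n (k + 1) := by rw [hp]; ring
      rw [hpos]
      have hdvd : ¬ n (k + 1) ∣ d + 1 := Nat.not_dvd_of_pos_of_lt d.succ_pos (by omega)
      exact congrArg a (toeplitzLevel_mul_blockPeriod hn hdvd)
    · refine fun d _ ↦ factorAt_eq_iff.2 fun i hi ↦ (toeplitzWord_congr hn (k := k + 1) ?_ ?_).symm
      · rw [hp, add_right_comm]
        simp [Nat.ModEq]
      · exact Nat.not_dvd_of_pos_of_lt (by omega) (by omega)

lemma mem_toeplitzLang_iff (hn : ∀ k, 2 ≤ n k) {u : List A} :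
    u ∈ ToeplitzLang a n ↔ ∃ s, 1 ≤ s ∧ u = factorAt (toeplitzWord a n) s u.length := by
  simp only [ToeplitzLang, Set.mem_ofPred_eq, toeplitzBlock_eq_factorAt hn, infix_factorAt_iff]
  constructor
  · rintro ⟨k, s, hs, -, hu⟩
    exact ⟨s, hs, hu⟩
  · rintro ⟨s, hs, hu⟩
    have := lt_blockPeriod hn (s + u.length + 1)
    exact ⟨s + u.length, s, hs, by omega, hu⟩

lemma factorAt_mem_toeplitzLang (hn : ∀ k, 2 ≤ n k) {s : ℕ} (hs : 1 ≤ s) (L : ℕ) :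
    factorAt (toeplitzWord a n) s L ∈ ToeplitzLang a n :=
  (mem_toeplitzLang_iff hn).2 ⟨s, hs, by rw [length_factorAt]⟩

lemma factorAt_toeplitzWord_congr (hn : ∀ k, 2 ≤ n k) {s t r k L : ℕ} (hr : r < blockPeriod n k)
    (hL : L ≤ blockPeriod n k) (hs : blockPeriod n k ∣ s + r) (ht : blockPeriod n k ∣ t + r)
    (h : toeplitzWord a n (s + r) = toeplitzWord a n (t + r)) :
    factorAt (toeplitzWord a n) s L = factorAt (toeplitzWord a n) t L := by
  refine factorAt_eq_iff.2 fun i hi ↦ ?_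
  obtain rfl | hir := eq_or_ne i r
  · exact h
  have hsr : s + r ≡ 0 [MOD blockPeriod n k] := Nat.modEq_zero_iff_dvd.2 hs
  have htr : t + r ≡ 0 [MOD blockPeriod n k] := Nat.modEq_zero_iff_dvd.2 ht
  have hst : s ≡ t [MOD blockPeriod n k] := (hsr.trans htr.symm).add_right_cancel' r
  refine toeplitzWord_congr hn (hst.add_right i) fun hsi ↦ hir ?_
  have hri : s + i ≡ s + r [MOD blockPeriod n k] := (Nat.modEq_zero_iff_dvd.2 hsi).trans hsr.symm
  exact (hri.add_left_cancel' s).eq_of_lt_of_lt (hi.trans_le hL) hr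

end Word

/-! ### The functions `K` and `m` -/

section Return

variable {A : Type*} {a : ℕ → A}

lemma Kf_spec (hfin : (Set.range a).Finite) (k : ℕ) :
    k < Kf a k ∧ {x | ∃ i, k + 1 ≤ i ∧ i ≤ Kf a k ∧ a i = x} = Ak a (k + 1) := by
  refine Nat.sInf_mem (s := {j | k < j ∧ {x | ∃ i, k + 1 ≤ i ∧ i ≤ j ∧ a i = x} = Ak a (k + 1)}) ?_
  have hfin' : (a '' Set.Ici (k + 1)).Finite := hfin.subset (Set.image_subset_range _ _)
  obtain ⟨T, hT, hTfin, hTA⟩ := hfin'.exists_subset_finite_image_eq subset_rfl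
  obtain ⟨b, hb⟩ := hTfin.bddAbove
  refine ⟨max (k + 1) b, by omega, Set.Subset.antisymm ?_ ?_⟩
  · rintro x ⟨i, hi, -, rfl⟩
    exact ⟨i, hi, rfl⟩
  · rintro x ⟨j, hj, rfl⟩
    obtain ⟨i, hi, hij⟩ : a j ∈ a '' T := hTA ▸ Set.mem_image_of_mem a hj
    exact ⟨i, hT hi, le_max_of_le_right (hb hi), hij⟩

lemma exists_le_Kf_apply_eq (hfin : (Set.range a).Finite) {k j : ℕ} (h : k < j) :
    ∃ i, k < i ∧ i ≤ Kf a k ∧ a i = a j := by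
  have hj : a j ∈ Ak a (k + 1) := ⟨j, h, rfl⟩
  rwa [← (Kf_spec hfin k).2] at hj

lemma apply_ne_apply_Kf (hfin : (Set.range a).Finite) {k i : ℕ} (hki : k < i) (hiK : i < Kf a k) :
    a i ≠ a (Kf a k) := by
  intro he
  refine Nat.notMem_of_lt_sInf (show Kf a k - 1 < Kf a k by omega)
    ⟨by omega, Set.Subset.antisymm ?_ ?_⟩
  · rintro x ⟨j, hj, -, rfl⟩
    exact ⟨j, hj, rfl⟩
  · rintro x ⟨j, hj, rfl⟩
    obtain ⟨l, hkl, hlK, hlj⟩ := exists_le_Kf_apply_eq hfin hj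
    rcases hlK.lt_or_eq with hlK | rfl
    · exact ⟨l, hkl, by omega, hlj⟩
    · exact ⟨i, hki, by omega, he.trans hlj⟩

lemma apply_Kf_succ_eq_of_lt (hfin : (Set.range a).Finite) {k : ℕ} (h : Kf a k < Kf a (k + 1)) :
    a (Kf a (k + 1)) = a (k + 1) := by
  obtain ⟨i, hki, hiK, hi⟩ :=
    exists_le_Kf_apply_eq hfin (k.lt_succ_self.trans (lt_Kf hfin (k + 1)))
  rcases Nat.eq_or_lt_of_le hki with rfl | hki
  · exact hi.symm
  · exact absurd hi (apply_ne_apply_Kf hfin hki (hiK.trans_lt h))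

lemma add_two_le_Kf (hfin : (Set.range a).Finite) (hAev : (Aev a).Nontrivial) (k : ℕ) :
    k + 2 ≤ Kf a k := by
  by_contra! hK
  obtain ⟨x, hx, hne⟩ := hAev.exists_ne (a (k + 1))
  obtain ⟨j, hj, rfl⟩ := Set.mem_iInter.1 hx (k + 1)
  obtain ⟨i, hki, hiK, hi⟩ := exists_le_Kf_apply_eq hfin hj
  obtain rfl : i = k + 1 := by omega
  exact hne hi.symm

lemma mseq_succ_spec (hfin : (Set.range a).Finite) (i : ℕ) :
    mseq a i < mseq a (i + 1) ∧ Kf a (mseq a i) < Kf a (mseq a (i + 1)) :=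
  Nat.sInf_mem (s := {j | mseq a i < j ∧ Kf a (mseq a i) < Kf a j})
    ⟨Kf a (mseq a i), lt_Kf hfin _, lt_Kf hfin _⟩

lemma mseq_strictMono (hfin : (Set.range a).Finite) : StrictMono (mseq a) :=
  strictMono_nat_of_lt_succ fun i ↦ (mseq_succ_spec hfin i).1

lemma Kf_le_of_lt_mseq_succ {i k : ℕ} (hk : mseq a i ≤ k) (hk' : k < mseq a (i + 1)) :
    Kf a k ≤ Kf a (mseq a i) := by
  rcases hk.eq_or_lt with rfl | hk
  · rfl
  · by_contra! hlt
    exact Nat.notMem_of_lt_sInf hk' ⟨hk, hlt⟩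

lemma apply_Kf_mseq_succ (hfin : (Set.range a).Finite) (i : ℕ) :
    a (Kf a (mseq a (i + 1))) = a (mseq a (i + 1)) := by
  obtain ⟨hm, hK⟩ := mseq_succ_spec hfin i
  obtain ⟨k, hk⟩ := Nat.exists_eq_add_of_le' (Nat.one_le_of_lt hm)
  have hle : Kf a k ≤ Kf a (mseq a i) := Kf_le_of_lt_mseq_succ (i := i) (by omega) (by omega)
  rw [hk] at hK ⊢
  exact apply_Kf_succ_eq_of_lt hfin (hle.trans_lt hK)

end Return

/-! ### Bounds for the repetitivity function -/

section Repetitivity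

variable {A : Type*} {a : ℕ → A} {n : ℕ → ℕ}

lemma infix_of_length_le (hn : ∀ k, 2 ≤ n k) (hfin : (Set.range a).Finite) {k : ℕ} {u w : List A}
    (hu : u ∈ ToeplitzLang a n) (hw : w ∈ ToeplitzLang a n)
    (hul : u.length ≤ blockPeriod n (k + 1)) (hwl : 3 * blockPeriod n (Kf a k) ≤ w.length) :
    u <:+: w := by
  obtain ⟨s, hs, hu⟩ := (mem_toeplitzLang_iff hn).1 hu
  obtain ⟨t, ht, hw⟩ := (mem_toeplitzLang_iff hn).1 hw
  obtain ⟨r, hr, hsr⟩ := exists_lt_dvd_add (lt_blockPeriod hn (k + 1)).pos s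
  obtain ⟨i, hki, hiK, hi⟩ :=
    exists_le_Kf_apply_eq hfin ((le_toeplitzLevel_iff hn (by omega)).2 hsr)
  obtain ⟨M, hM, hM', rfl⟩ := exists_toeplitzLevel_eq hn i (t + r)
  obtain ⟨v, rfl⟩ := Nat.exists_eq_add_of_le' (show r ≤ M by omega)
  have hvr : blockPeriod n (k + 1) ∣ v + r := (le_toeplitzLevel_iff hn (by omega)).1 hki
  have huv := factorAt_toeplitzWord_congr (a := a) hn hr hul hsr hvr hi.symm
  have hkK := (blockPeriod_strictMono hn).monotone (show k + 1 ≤ Kf a k from lt_Kf hfin k)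
  have hiK' := (blockPeriod_strictMono hn).monotone hiK
  rw [hw, infix_factorAt_iff]
  exact ⟨v, by omega, by omega, hu.trans huv⟩

lemma repet_le (hn : ∀ k, 2 ≤ n k) (hfin : (Set.range a).Finite) {k L : ℕ}
    (hL : L ≤ blockPeriod n (k + 1)) : repet a n L ≤ 3 * blockPeriod n (Kf a k) :=
  Nat.sInf_le fun _ hu hul _ hw hwl ↦ infix_of_length_le hn hfin hu hw (hul.trans_le hL) hwl.ge

lemma repet_spec (hn : ∀ k, 2 ≤ n k) (hfin : (Set.range a).Finite) {u w : List A}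
    (hu : u ∈ ToeplitzLang a n) (hw : w ∈ ToeplitzLang a n) (h : w.length = repet a n u.length) :
    u <:+: w :=
  Nat.sInf_mem (s := {L' | ∀ v ∈ ToeplitzLang a n, v.length = u.length →
      ∀ w ∈ ToeplitzLang a n, w.length = L' → v <:+: w})
    ⟨3 * blockPeriod n (Kf a u.length), fun _ hv hvl _ hw hwl ↦ infix_of_length_le hn hfin hv hw
      (hvl.trans_le (by have := lt_blockPeriod hn (u.length + 1); omega)) hwl.ge⟩ u hu rfl w hw h

/-- Only the central position `blockPeriod n K` could carry a letter other than `a k`, and it does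
not, by `hK`. -/
lemma toeplitzWord_eq_of_dvd_of_near (hn : ∀ k, 2 ≤ n k) {k K t : ℕ} (hkK : k < K)
    (hK : a K = a k) (hlt : blockPeriod n K < t + blockPeriod n (k + 1))
    (hgt : t < blockPeriod n K + blockPeriod n (k + 1)) (ht : blockPeriod n k ∣ t) :
    toeplitzWord a n t = a k := by
  by_cases htd : blockPeriod n (k + 1) ∣ t
  · obtain rfl : t = blockPeriod n K := by
      obtain ⟨d, rfl⟩ := htd
      obtain ⟨e, he⟩ := blockPeriod_dvd (n := n) (Nat.succ_le_of_lt hkK)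
      rw [he, ← mul_add_one] at hlt hgt
      have := Nat.lt_of_mul_lt_mul_left hlt
      have := Nat.lt_of_mul_lt_mul_left hgt
      rw [he, show d = e by omega]
    have hlevel := toeplitzLevel_mul_blockPeriod hn (d := 1)
      (Nat.not_dvd_of_pos_of_lt one_pos (hn K))
    rw [one_mul] at hlevel
    rw [toeplitzWord, hlevel, hK]
  · exact congrArg a (toeplitzLevel_eq_of_dvd hn ht htd)

lemma toeplitzWord_add_blockPeriod_of_near (hn : ∀ k, 2 ≤ n k) {k K t : ℕ} (hkK : k < K)
    (hK : a K = a k) (hlt : blockPeriod n K < t + blockPeriod n (k + 1))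
    (hgt : t + blockPeriod n k < blockPeriod n K + blockPeriod n (k + 1)) :
    toeplitzWord a n t = toeplitzWord a n (t + blockPeriod n k) := by
  by_cases htd : blockPeriod n k ∣ t
  · rw [toeplitzWord_eq_of_dvd_of_near hn hkK hK hlt (by omega) htd,
      toeplitzWord_eq_of_dvd_of_near hn hkK hK (by omega) hgt (dvd_add htd dvd_rfl)]
  · exact toeplitzWord_congr hn (by simp [Nat.ModEq]) htd

lemma exists_toeplitzWord_ne_add_blockPeriod (hn : ∀ k, 2 ≤ n k) {k K s : ℕ}
    (hne : ∀ i, k < i → i < K → a i ≠ a k) (hs : 1 ≤ s)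
    (hsK : s + blockPeriod n (k + 1) ≤ blockPeriod n K) :
    ∃ t, s ≤ t ∧ t < s + blockPeriod n (k + 1) ∧
      toeplitzWord a n t ≠ toeplitzWord a n (t + blockPeriod n k) := by
  obtain ⟨r, hr, hsr⟩ := exists_lt_dvd_add (lt_blockPeriod hn (k + 1)).pos s
  have hlevel : k + 1 ≤ toeplitzLevel n (s + r) := (le_toeplitzLevel_iff hn (by omega)).2 hsr
  have hlevel' : toeplitzLevel n (s + r) < K := by
    by_contra! hle
    have := Nat.le_of_dvd (by omega) ((le_toeplitzLevel_iff hn (by omega)).1 hle)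
    omega
  have hnext : toeplitzLevel n (s + r + blockPeriod n k) = k := by
    refine toeplitzLevel_eq_of_dvd hn
      (dvd_add ((blockPeriod_dvd k.le_succ).trans hsr) dvd_rfl) fun hd ↦ ?_
    exact Nat.not_dvd_of_pos_of_lt (lt_blockPeriod hn k).pos
      (blockPeriod_strictMono hn k.lt_succ_self) ((Nat.dvd_add_right hsr).1 hd)
  refine ⟨s + r, by omega, by omega, ?_⟩
  rw [toeplitzWord, toeplitzWord, hnext]
  exact hne _ hlevel hlevel'

lemma blockPeriod_le_repet (hn : ∀ k, 2 ≤ n k) (hfin : (Set.range a).Finite) {k K : ℕ}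
    (hkK : k < K) (hK : a K = a k) (hne : ∀ i, k < i → i < K → a i ≠ a k) :
    blockPeriod n K ≤ repet a n (2 * blockPeriod n (k + 1) - 1) := by
  by_contra! hlt
  set L := 2 * blockPeriod n (k + 1) - 1
  set s := blockPeriod n K - blockPeriod n (k + 1) + 1
  have hk : blockPeriod n k < blockPeriod n (k + 1) := blockPeriod_strictMono hn k.lt_succ_self
  have hkK' : blockPeriod n (k + 1) ≤ blockPeriod n K := (blockPeriod_strictMono hn).monotone hkK
  have hinfix : factorAt (toeplitzWord a n) s L <:+: factorAt (toeplitzWord a n) 1 (repet a n L) :=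
    repet_spec hn hfin (factorAt_mem_toeplitzLang hn (by omega) _)
      (factorAt_mem_toeplitzLang hn le_rfl _) (by simp)
  obtain ⟨v, hv, hvL, heq⟩ := infix_factorAt_iff.1 hinfix
  rw [length_factorAt] at hvL heq
  obtain ⟨t, hvt, htv, hbreak⟩ :=
    exists_toeplitzWord_ne_add_blockPeriod hn (s := v) hne hv (by omega)
  obtain ⟨i, rfl⟩ := Nat.exists_eq_add_of_le hvt
  have hperiod := toeplitzWord_add_blockPeriod_of_near hn (t := s + i) hkK hK (by omega) (by omega)
  rw [add_assoc s, factorAt_eq_iff.1 heq i (by omega), factorAt_eq_iff.1 heq _ (by omega),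
    ← add_assoc] at hperiod
  exact hbreak hperiod

end Repetitivity

/-! ### Linear repetitivity -/

section LinearRepetitivity

variable {A : Type*} {a : ℕ → A} {n : ℕ → ℕ}

lemma prod_Icc_mseq_succ_le (hn : ∀ k, 2 ≤ n k) (hfin : (Set.range a).Finite) {c : ℕ}
    (hc : ∀ L, 1 ≤ L → repet a n L ≤ c * L) (i : ℕ) :
    ∏ j ∈ Finset.Icc (mseq a (i + 1) + 1) (Kf a (mseq a (i + 1)) - 1), n j ≤ 2 * c := by
  set k := mseq a (i + 1)
  have hpos := (lt_blockPeriod hn (k + 1)).pos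
  have hreturn : a (Kf a k) = a k := apply_Kf_mseq_succ hfin i
  have hfirst : ∀ i, k < i → i < Kf a k → a i ≠ a k := fun i hki hiK ↦
    hreturn ▸ apply_ne_apply_Kf hfin hki hiK
  refine Nat.le_of_mul_le_mul_left ?_ hpos
  calc blockPeriod n (k + 1) * ∏ j ∈ Finset.Icc (k + 1) (Kf a k - 1), n j
      = blockPeriod n (Kf a k) := blockPeriod_mul_prod_Icc (lt_Kf hfin k)
    _ ≤ repet a n (2 * blockPeriod n (k + 1) - 1) :=
        blockPeriod_le_repet hn hfin (lt_Kf hfin k) hreturn hfirst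
    _ ≤ c * (2 * blockPeriod n (k + 1) - 1) := hc _ (by omega)
    _ ≤ c * (2 * blockPeriod n (k + 1)) := Nat.mul_le_mul_left c (Nat.sub_le _ _)
    _ = blockPeriod n (k + 1) * (2 * c) := by ring

lemma prod_Icc_Kf_le_of_mseq (hn : ∀ k, 0 < n k) (hfin : (Set.range a).Finite) {B : ℕ}
    (hB : ∀ i, ∏ j ∈ Finset.Icc (mseq a i + 1) (Kf a (mseq a i) - 1), n j ≤ B) (k : ℕ) :
    ∏ j ∈ Finset.Icc (k + 1) (Kf a k - 1), n j ≤ B := by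
  have hm := mseq_strictMono hfin
  obtain ⟨i, hik, hki⟩ := hm.exists_between_of_tendsto_atTop hm.tendsto_atTop
    (show mseq a 0 < k + 1 from k.succ_pos)
  have hsub : Finset.Icc (k + 1) (Kf a k - 1) ⊆
      Finset.Icc (mseq a i + 1) (Kf a (mseq a i) - 1) :=
    Finset.Icc_subset_Icc hik
      (Nat.sub_le_sub_right (Kf_le_of_lt_mseq_succ (Nat.le_of_lt_succ hik) hki) 1)
  exact (Finset.prod_le_prod_of_subset_of_one_le' hsub fun j _ _ ↦ hn j).trans (hB i)

lemma le_prod_Icc_Kf (hn : ∀ k, 0 < n k) (hfin : (Set.range a).Finite)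
    (hAev : (Aev a).Nontrivial) (k : ℕ) :
    n (k + 1) ≤ ∏ j ∈ Finset.Icc (k + 1) (Kf a k - 1), n j := by
  have := add_two_le_Kf hfin hAev k
  exact Finset.single_le_prod' (f := n) (fun j _ ↦ hn j) (Finset.mem_Icc.2 ⟨le_rfl, by omega⟩)

lemma repet_le_mul_of_prod_Icc_le (hn : ∀ k, 2 ≤ n k) (hfin : (Set.range a).Finite) {B b : ℕ}
    (hb : ∀ k, n k ≤ b) (hB : ∀ k, ∏ j ∈ Finset.Icc (k + 1) (Kf a k - 1), n j ≤ B) {L : ℕ}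
    (hL : 1 ≤ L) : repet a n L ≤ 3 * b * B * L := by
  have hq := blockPeriod_strictMono hn
  obtain ⟨k, hkL, hLk⟩ := hq.exists_between_of_tendsto_atTop hq.tendsto_atTop
    (show blockPeriod n 0 < L + 1 by simpa [Nat.one_le_iff_ne_zero, pos_iff_ne_zero] using hL)
  calc repet a n L
      ≤ 3 * blockPeriod n (Kf a k) := repet_le hn hfin (by omega)
    _ = 3 * (n k * blockPeriod n k * ∏ j ∈ Finset.Icc (k + 1) (Kf a k - 1), n j) := by
        rw [← blockPeriod_succ, blockPeriod_mul_prod_Icc (lt_Kf hfin k)]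
    _ ≤ 3 * (b * L * B) := by
        gcongr
        exacts [hb k, Nat.le_of_lt_succ hkL, hB k]
    _ = 3 * b * B * L := by ring

end LinearRepetitivity

theorem stmt18_general {A : Type*} {a : ℕ → A} {n : ℕ → ℕ} (hn : ∀ k, 2 ≤ n k)
    (hfin : (Set.range a).Finite) (hAev : (Aev a).Nontrivial) :
    (∃ c : ℕ, ∀ L : ℕ, 1 ≤ L → repet a n L ≤ c * L) ↔
    (∃ C : ℕ, ∀ i : ℕ, 1 ≤ i →
      ∏ j ∈ Finset.Icc (mseq a i + 1) (Kf a (mseq a i) - 1), n j ≤ C) := by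
  constructor
  · rintro ⟨c, hc⟩
    refine ⟨2 * c, fun i hi ↦ ?_⟩
    obtain ⟨i, rfl⟩ := Nat.exists_eq_add_of_le' hi
    exact prod_Icc_mseq_succ_le hn hfin hc i
  · rintro ⟨C, hC⟩
    have hpos (k : ℕ) : 0 < n k := two_pos.trans_le (hn k)
    set B := max C (∏ j ∈ Finset.Icc (mseq a 0 + 1) (Kf a (mseq a 0) - 1), n j)
    have hBm : ∀ i, ∏ j ∈ Finset.Icc (mseq a i + 1) (Kf a (mseq a i) - 1), n j ≤ B
      | 0 => le_max_right _ _
      | i + 1 => le_max_of_le_left (hC (i + 1) i.succ_pos)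
    have hB := prod_Icc_Kf_le_of_mseq hpos hfin hBm
    have hb : ∀ k, n k ≤ max (n 0) B
      | 0 => le_max_left _ _
      | k + 1 => le_max_of_le_right ((le_prod_Icc_Kf hpos hfin hAev k).trans (hB k))
    exact ⟨_, fun L hL ↦ repet_le_mul_of_prod_Icc_le hn hfin hb hB hL⟩

/-- the subshift is linearly repetitive iff
`i ↦ ∏_{j = m i + 1}^{K (m i) - 1} n j` (for `i ≥ 1`) is bounded above. -/
theorem stmt18 {A : Type*} [Fintype A] [Nonempty A]
    (a : ℕ → A) (n : ℕ → ℕ) (hn : ∀ k, 2 ≤ n k) (ha : ∀ k, a k ≠ a (k + 1))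
    (hAev : 2 ≤ (Aev a).ncard) :
    (∃ c : ℕ, ∀ L : ℕ, 1 ≤ L → repet a n L ≤ c * L) ↔
    (∃ C : ℕ, ∀ i : ℕ, 1 ≤ i →
      ∏ j ∈ Finset.Icc (mseq a i + 1) (Kf a (mseq a i) - 1), n j ≤ C) :=
  stmt18_general hn (Set.toFinite _) (Set.one_lt_ncard_iff_nontrivial.1 hAev)
end
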